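/- Let g ∈ H^∞ and 0 < p < ∞. Then Γ(g) vanishes identically in the unit disk if and only if the only z-invariant subspace of H^p contained in the H^p-closure of ℂ[B,g] is the trivial subspace {0}. (A z-invariant subspace is a closed subspace M of H^p such that z·f ∈ M whenever f ∈ M.) -/

import Mathlib

/-!
Write `B` for the Blaschke product and `ψ_1, …, ψ_n` for the local holomorphic branches of `B⁻¹`
over a regular value (`exists_branches`).

If `Γ(g) = 0`, then `∏_{j ≠ i} (g ∘ ψ_i - g ∘ ψ_j) = 0` near a regular value, so
`g ∘ ψ_i = g ∘ ψ_j` for some `j ≠ i`, by analyticity. Point evaluations are continuous on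
`H^p` (`norm_rpow_le_of_circMean_le`), so every `f` in the closure of `ℂ[B,g]` satisfies
`f ∘ ψ_i = f ∘ ψ_j`. If `f` lies in a `z`-invariant subspace of the closure, the same is true of
`z f`, whence `(ψ_i - ψ_j) · f ∘ ψ_i = 0` and `f = 0` (`forward`).

Conversely, for `f` in `H^∞` the polynomial `∑_{ζ} f(ζ) ∏_{ξ ≠ ζ} (X - g(ξ))`, where `ζ, ξ` run
through the fiber of `B` over `w`, has coefficients that are symmetric in the fiber; they are
therefore bounded holomorphic functions `c_k` of `w`, up to removable singularities at the finitely
many critical values (`exists_coeff_fun`). Evaluating at `w = B(z)` and `X = g(z)` gives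
`f 𝒟(g) = ∑_{k < n} c_k(B) g^k` (`sum_coeff_mul_pow`). Each `c_k(B) g^k` is in the closure of
`ℂ[B,g]`: since `B(0) = 0`, composition with `B` is bounded on `H²` (Littlewood's subordination
principle, `circMean_two_comp_le`), so `c_k(B)` is an `H²`-limit of uniformly bounded polynomials
in `B`, and such a sequence converges in every `H^p` (`comp_mul_pow_mem_hpClosure`). Taking
`f = z^m` for all `m` shows that `𝒟(g)` belongs to `{f | ∀ m, z^m f ∈ closure}`, which is a
`z`-invariant subspace (`isZInvSubspace_maximal`). If only the trivial invariant subspace is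
contained in the closure, then `𝒟(g) = 0`, and so `Γ(g) = 0` (`backward`).
-/

open Complex Polynomial MeasureTheory Metric Set Filter Topology
open scoped Classical

noncomputable section

/-- The open unit disk in `ℂ`. -/
def uDisk : Set ℂ := Metric.ball 0 1

/-- The closed unit disk in `ℂ`. -/
def cDisk : Set ℂ := Metric.closedBall 0 1

/-- The finite Blaschke product with zero set `a 0, …, a (n-1)`:
`B(z) = ∏_j (a_j - z)/(1 - conj(a_j)·z)`. -/
def blaschke {n : ℕ} (a : Fin n → ℂ) (z : ℂ) : ℂ :=
  ∏ j, (a j - z) / (1 - (starRingEnd ℂ) (a j) * z)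

/-- The multiset of the `n` solutions (with multiplicity) `φ_0(z) = z, φ_1(z), …, φ_{n-1}(z)`
of `B(w) = B(z)`, realized as the roots of the polynomial equation
`∏_j (a_j - w) = B(z) · ∏_j (1 - conj(a_j)·w)`. -/
def fiberMS {n : ℕ} (a : Fin n → ℂ) (z : ℂ) : Multiset ℂ :=
  ((∏ j, (Polynomial.C (a j) - Polynomial.X)) -
    Polynomial.C (blaschke a z) *
      ∏ j, (1 - Polynomial.C ((starRingEnd ℂ) (a j)) * Polynomial.X)).roots

/-- `𝒟(f)(z) = ∏_{j=1}^{n-1} (f(z) - f(φ_j(z)))`, where `φ_1(z), …, φ_{n-1}(z)` is the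
fiber of `B` over `B(z)` with one copy of `z` removed.  In particular
`calD a id z = ∏_{j=1}^{n-1} (z - φ_j(z))`. -/
def calD {n : ℕ} (a : Fin n → ℂ) (f : ℂ → ℂ) (z : ℂ) : ℂ :=
  (((fiberMS a z).erase z).map (fun w => f z - f w)).prod

/-- `G` is (the holomorphic extension after removing singularities of) `Γ(f) = 𝒟(f)/𝒟`. -/
def IsGamma {n : ℕ} (a : Fin n → ℂ) (f G : ℂ → ℂ) : Prop :=
  DifferentiableOn ℂ G uDisk ∧ ∀ z ∈ uDisk, G z * calD a id z = calD a f z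

/-- `p`-th power integral mean of `f` on the circle of radius `r`. -/
def circMean (p : ℝ) (f : ℂ → ℂ) (r : ℝ) : ℝ :=
  ∫ θ in (0:ℝ)..(2 * Real.pi), ‖f ((r : ℂ) * Complex.exp ((θ : ℂ) * Complex.I))‖ ^ p

/-- The `H^p` norm of `f` (for `0 < p < ∞`). -/
def hpNorm (p : ℝ) (f : ℂ → ℂ) : ℝ :=
  (sSup {m : ℝ | ∃ r ∈ Set.Ico (0:ℝ) 1, m = circMean p f r}) ^ (1 / p)

/-- Membership in the Hardy space `H^p`, `0 < p < ∞`: holomorphic on the disk with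
uniformly bounded integral means. -/
def MemHp (p : ℝ) (f : ℂ → ℂ) : Prop :=
  DifferentiableOn ℂ f uDisk ∧ ∃ C : ℝ, ∀ r ∈ Set.Ico (0:ℝ) 1, circMean p f r ≤ C

/-- Membership in `H^∞`: bounded holomorphic functions on the disk. -/
def MemHinf (f : ℂ → ℂ) : Prop :=
  DifferentiableOn ℂ f uDisk ∧ ∃ C : ℝ, ∀ z ∈ uDisk, ‖f z‖ ≤ C

/-- The `H^∞` (sup) norm. -/
def hinfNorm (f : ℂ → ℂ) : ℝ := sSup {m : ℝ | ∃ z ∈ uDisk, m = ‖f z‖}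

/-- The algebra of all polynomials in the functions `F 0, …, F (m-1)`. -/
def algGen (m : ℕ) (F : Fin m → (ℂ → ℂ)) : Set (ℂ → ℂ) :=
  {h | ∃ P : MvPolynomial (Fin m) ℂ, ∀ z : ℂ, h z = MvPolynomial.eval (fun i => F i z) P}

/-- The algebra `ℂ[F,G]` of all polynomials in the two functions `F` and `G`. -/
def algGen2 (F G : ℂ → ℂ) : Set (ℂ → ℂ) := algGen 2 ![F, G]

/-- The (sequential) closure of `S` in `H^p`. -/
def hpClosure (p : ℝ) (S : Set (ℂ → ℂ)) : Set (ℂ → ℂ) :=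
  {f | MemHp p f ∧ ∃ u : ℕ → (ℂ → ℂ), (∀ k, u k ∈ S) ∧
    Filter.Tendsto (fun k => hpNorm p (fun z => f z - u k z)) Filter.atTop (nhds 0)}

/-- `S` has finite codimension in `H^p`: finitely many functions in `H^p` together with `S`
span all of `H^p`. -/
def FiniteCodimHp (p : ℝ) (S : Set (ℂ → ℂ)) : Prop :=
  ∃ (k : ℕ) (e : Fin k → (ℂ → ℂ)), (∀ i, MemHp p (e i)) ∧
    ∀ f, MemHp p f → ∃ (c : Fin k → ℂ) (s : ℂ → ℂ), s ∈ S ∧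
      ∀ z ∈ uDisk, f z = s z + ∑ i, c i * e i z

/-- Inner function: bounded by 1, holomorphic, radial limits of modulus 1 a.e. -/
def IsInner (f : ℂ → ℂ) : Prop :=
  DifferentiableOn ℂ f uDisk ∧ (∀ z ∈ uDisk, ‖f z‖ ≤ 1) ∧
  ∀ᵐ θ : ℝ ∂volume, ∃ l : ℂ, ‖l‖ = 1 ∧
    Filter.Tendsto (fun r : ℝ => f ((r : ℂ) * Complex.exp ((θ : ℂ) * Complex.I)))
      (nhdsWithin 1 (Set.Iio 1)) (nhds l)

/-- `J` divides `h`, with a quotient holomorphic on the disk. -/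
def InnerDivides (J h : ℂ → ℂ) : Prop :=
  ∃ k : ℂ → ℂ, DifferentiableOn ℂ k uDisk ∧ ∀ z ∈ uDisk, h z = J z * k z

/-- Outer function: a holomorphic function on the disk whose only inner divisors are
unimodular constants (i.e. whose inner part is a unimodular constant). -/
def IsOuter (h : ℂ → ℂ) : Prop :=
  DifferentiableOn ℂ h uDisk ∧
  ∀ J : ℂ → ℂ, IsInner J → InnerDivides J h →
    ∃ c : ℂ, ‖c‖ = 1 ∧ ∀ z ∈ uDisk, J z = c

/-- `I` is the inner part of `h`: `I` is inner and `h = I·F` with `F` outer. -/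
def IsInnerPartOf (I h : ℂ → ℂ) : Prop :=
  IsInner I ∧ ∃ F : ℂ → ℂ, IsOuter F ∧ ∀ z ∈ uDisk, h z = I z * F z

/-- Finite Blaschke product (up to a unimodular constant factor). -/
def IsFiniteBlaschke (f : ℂ → ℂ) : Prop :=
  ∃ (m : ℕ) (c : ℂ) (b : Fin m → ℂ), ‖c‖ = 1 ∧ (∀ i, b i ∈ uDisk) ∧
    ∀ z ∈ uDisk, f z = c * ∏ i, (b i - z) / (1 - (starRingEnd ℂ) (b i) * z)

/-- `h` has no singular inner factor: every zero-free inner divisor of `h` is a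
unimodular constant. -/
def NoSingularInnerFactor (h : ℂ → ℂ) : Prop :=
  ∀ J : ℂ → ℂ, IsInner J → (∀ z ∈ uDisk, J z ≠ 0) → InnerDivides J h →
    ∃ c : ℂ, ‖c‖ = 1 ∧ ∀ z ∈ uDisk, J z = c

/-- A `z`-invariant subspace of `H^p`: a closed subspace `M` with `z·f ∈ M` for `f ∈ M`. -/
def IsZInvSubspace (p : ℝ) (M : Set (ℂ → ℂ)) : Prop :=
  (∀ f ∈ M, MemHp p f) ∧ (fun _ => (0 : ℂ)) ∈ M ∧
  (∀ f ∈ M, ∀ h ∈ M, (fun z => f z + h z) ∈ M) ∧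
  (∀ c : ℂ, ∀ f ∈ M, (fun z => c * f z) ∈ M) ∧
  (∀ f ∈ M, (fun z => z * f z) ∈ M) ∧
  (∀ f, MemHp p f →
    (∃ u : ℕ → ℂ → ℂ, (∀ k, u k ∈ M) ∧
      Filter.Tendsto (fun k => hpNorm p (fun z => f z - u k z)) Filter.atTop (nhds 0)) →
    f ∈ M)

/-! ### Integral means and the closure in `H^p` -/

lemma circPt_mem {r : ℝ} (hr : r ∈ Ico (0:ℝ) 1) (θ : ℝ) :
    (r : ℂ) * Complex.exp ((θ : ℂ) * Complex.I) ∈ uDisk := by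
  simp [uDisk, Complex.norm_exp_ofReal_mul_I, abs_of_nonneg hr.1, hr.2]

lemma continuous_comp_circPt {E : Type*} [TopologicalSpace E] {f : ℂ → E}
    (hf : ContinuousOn f uDisk) {r : ℝ} (hr : r ∈ Ico (0:ℝ) 1) :
    Continuous fun θ : ℝ => f ((r : ℂ) * Complex.exp ((θ : ℂ) * Complex.I)) :=
  hf.comp_continuous (by fun_prop) (circPt_mem hr)

lemma continuous_circMean_integrand {p : ℝ} (hp : 0 < p) {f : ℂ → ℂ} (hf : ContinuousOn f uDisk)
    {r : ℝ} (hr : r ∈ Ico (0:ℝ) 1) :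
    Continuous fun θ : ℝ => ‖f ((r : ℂ) * Complex.exp ((θ : ℂ) * Complex.I))‖ ^ p :=
  (continuous_comp_circPt hf hr).norm.rpow_const fun _ => Or.inr hp.le

lemma circMean_nonneg (p : ℝ) (f : ℂ → ℂ) (r : ℝ) : 0 ≤ circMean p f r :=
  intervalIntegral.integral_nonneg (by positivity) fun _ _ => by positivity

lemma circMean_congr {p : ℝ} {f h : ℂ → ℂ} (hfh : ∀ z ∈ uDisk, f z = h z)
    {r : ℝ} (hr : r ∈ Ico (0:ℝ) 1) : circMean p f r = circMean p h r := by
  unfold circMean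
  congr 1
  ext θ
  rw [hfh _ (circPt_mem hr θ)]

/-- A pointwise bound `‖f‖ ^ p ≤ α ‖h‖ ^ q + β ‖k‖ ^ s` on the disk integrates over circles. -/
lemma circMean_le_of_le {p q s α β : ℝ} (hp : 0 < p) (hq : 0 < q) (hs : 0 < s) {f h k : ℂ → ℂ}
    (hf : ContinuousOn f uDisk) (hh : ContinuousOn h uDisk) (hk : ContinuousOn k uDisk)
    (hle : ∀ z ∈ uDisk, ‖f z‖ ^ p ≤ α * ‖h z‖ ^ q + β * ‖k z‖ ^ s)
    {r : ℝ} (hr : r ∈ Ico (0:ℝ) 1) :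
    circMean p f r ≤ α * circMean q h r + β * circMean s k r := by
  unfold circMean
  have ih := (continuous_circMean_integrand hq hh hr).intervalIntegrable (μ := volume) 0
    (2 * Real.pi)
  have ik := (continuous_circMean_integrand hs hk hr).intervalIntegrable (μ := volume) 0
    (2 * Real.pi)
  rw [← intervalIntegral.integral_const_mul, ← intervalIntegral.integral_const_mul,
    ← intervalIntegral.integral_add (ih.const_mul _) (ik.const_mul _)]
  exact intervalIntegral.integral_mono (by positivity)
    ((continuous_circMean_integrand hp hf hr).intervalIntegrable _ _)
    ((ih.const_mul _).add (ik.const_mul _)) fun θ => hle _ (circPt_mem hr θ)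

lemma circMean_const {p : ℝ} (c : ℂ) (r : ℝ) :
    circMean p (fun _ => c) r = 2 * Real.pi * ‖c‖ ^ p := by
  simp [circMean]

lemma norm_add_rpow_le {p : ℝ} (hp : 0 < p) (x y : ℂ) :
    ‖x + y‖ ^ p ≤ 2 ^ p * ‖x‖ ^ p + 2 ^ p * ‖y‖ ^ p := by
  have key : ‖x + y‖ ≤ 2 * max ‖x‖ ‖y‖ := by
    have := norm_add_le x y
    have := le_max_left ‖x‖ ‖y‖
    have := le_max_right ‖x‖ ‖y‖
    linarith
  calc ‖x + y‖ ^ p ≤ (2 * max ‖x‖ ‖y‖) ^ p := by gcongr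
    _ = 2 ^ p * (max ‖x‖ ‖y‖) ^ p := by rw [Real.mul_rpow (by norm_num) (by positivity)]
    _ ≤ 2 ^ p * (‖x‖ ^ p + ‖y‖ ^ p) := by
      gcongr
      rcases max_cases ‖x‖ ‖y‖ with h | h <;> rw [h.1]
      · linarith [Real.rpow_nonneg (norm_nonneg y) p]
      · linarith [Real.rpow_nonneg (norm_nonneg x) p]
    _ = _ := by ring

lemma circMean_add_le {p : ℝ} (hp : 0 < p) {f h : ℂ → ℂ} (hf : ContinuousOn f uDisk)
    (hh : ContinuousOn h uDisk) {r : ℝ} (hr : r ∈ Ico (0:ℝ) 1) :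
    circMean p (fun z => f z + h z) r ≤ 2 ^ p * circMean p f r + 2 ^ p * circMean p h r :=
  circMean_le_of_le hp hp hp (hf.add hh) hf hh (fun _ _ => norm_add_rpow_le hp _ _) hr

lemma circMean_mul_le {p : ℝ} (hp : 0 < p) {f k : ℂ → ℂ} (hf : ContinuousOn f uDisk)
    (hk : ContinuousOn k uDisk) {K : ℝ} (hK : ∀ z ∈ uDisk, ‖k z‖ ≤ K)
    {r : ℝ} (hr : r ∈ Ico (0:ℝ) 1) :
    circMean p (fun z => k z * f z) r ≤ K ^ p * circMean p f r := by
  have := circMean_le_of_le (β := 0) (f := fun z => k z * f z) hp hp hp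
    (hk.mul hf) hf hf (α := K ^ p) (fun z hz => by
    rw [norm_mul, Real.mul_rpow (by positivity) (by positivity), zero_mul, add_zero]
    gcongr
    exact hK z hz) hr
  simpa using this

lemma circMean_le_of_bdd {p : ℝ} (hp : 0 < p) {f : ℂ → ℂ} (hf : ContinuousOn f uDisk) {K : ℝ}
    (hK : ∀ z ∈ uDisk, ‖f z‖ ≤ K) {r : ℝ} (hr : r ∈ Ico (0:ℝ) 1) :
    circMean p f r ≤ 2 * Real.pi * K ^ p := by
  have := circMean_mul_le hp (f := fun _ => 1) continuousOn_const hf hK hr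
  simp only [mul_one, circMean_const, norm_one, Real.one_rpow] at this
  linarith

/-- For uniformly bounded functions, smallness in mean square gives smallness in the `p`-th mean,
for every `p > 0`. -/
lemma circMean_le_of_sq {p : ℝ} (hp : 0 < p) {f : ℂ → ℂ} (hf : ContinuousOn f uDisk) {K : ℝ}
    (hK : ∀ z ∈ uDisk, ‖f z‖ ≤ K) {ε : ℝ} (hε : 0 < ε) {r : ℝ} (hr : r ∈ Ico (0:ℝ) 1) :
    circMean p f r ≤ 2 * Real.pi * ε ^ p + K ^ p / ε ^ 2 * circMean 2 f r := by
  have := circMean_le_of_le (α := 1) (β := K ^ p / ε ^ 2) (h := fun _ => (ε : ℂ)) hp hp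
    (zero_lt_two) hf continuousOn_const hf (fun z hz => by
      have hK0 : 0 ≤ K := (norm_nonneg _).trans (hK z hz)
      rw [Complex.norm_real, Real.norm_of_nonneg hε.le, one_mul]
      rcases le_total ‖f z‖ ε with h | h
      · have : ‖f z‖ ^ p ≤ ε ^ p := by gcongr
        have : 0 ≤ K ^ p / ε ^ 2 * ‖f z‖ ^ (2:ℝ) := by positivity
        linarith
      · have h1 : ‖f z‖ ^ p ≤ K ^ p := by gcongr; exact hK z hz
        have h2 : 1 ≤ ‖f z‖ ^ 2 / ε ^ 2 := by
          rw [le_div_iff₀ (by positivity), one_mul]; gcongr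
        have h3 : K ^ p / ε ^ 2 * ‖f z‖ ^ (2:ℝ) = K ^ p * (‖f z‖ ^ 2 / ε ^ 2) := by
          rw [Real.rpow_two]; ring
        have h4 : 0 ≤ ε ^ p := by positivity
        have h5 : 0 ≤ K ^ p := by positivity
        rw [h3]
        nlinarith) hr
  rwa [circMean_const, Complex.norm_real, Real.norm_of_nonneg hε.le, one_mul] at this

lemma MemHinf.memHp {p : ℝ} (hp : 0 < p) {f : ℂ → ℂ} (hf : MemHinf f) : MemHp p f := by
  obtain ⟨h1, K, hK⟩ := hf
  exact ⟨h1, _, fun r hr => circMean_le_of_bdd hp h1.continuousOn hK hr⟩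

lemma MemHinf.const (c : ℂ) : MemHinf fun _ => c :=
  ⟨differentiableOn_const _, ‖c‖, fun _ _ => le_rfl⟩

lemma MemHinf.add {f h : ℂ → ℂ} (hf : MemHinf f) (hh : MemHinf h) :
    MemHinf fun z => f z + h z := by
  obtain ⟨h1, K, hK⟩ := hf
  obtain ⟨h2, L, hL⟩ := hh
  exact ⟨h1.add h2, K + L, fun z hz => norm_add_le_of_le (hK z hz) (hL z hz)⟩

lemma MemHinf.mul {f h : ℂ → ℂ} (hf : MemHinf f) (hh : MemHinf h) :
    MemHinf fun z => f z * h z := by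
  obtain ⟨h1, K, hK⟩ := hf
  obtain ⟨h2, L, hL⟩ := hh
  exact ⟨h1.mul h2, K * L, fun z hz => norm_mul_le_of_le (hK z hz) (hL z hz)⟩

lemma MemHinf.id : MemHinf fun z => z :=
  ⟨differentiableOn_id, 1, fun z hz => by simpa [uDisk] using (mem_ball_zero_iff.1 hz).le⟩

lemma MemHinf.pow {f : ℂ → ℂ} (hf : MemHinf f) (m : ℕ) : MemHinf fun z => f z ^ m := by
  induction m with
  | zero => simpa using MemHinf.const 1
  | succ m ih => simpa [pow_succ] using ih.mul hf

lemma MemHinf.sum {ι : Type*} (s : Finset ι) {f : ι → ℂ → ℂ} (hf : ∀ i ∈ s, MemHinf (f i)) :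
    MemHinf fun z => ∑ i ∈ s, f i z := by
  induction s using Finset.induction_on with
  | empty => simpa using MemHinf.const 0
  | insert i s hi ih =>
    simp only [Finset.sum_insert hi]
    exact (hf i (by simp)).add (ih fun j hj => hf j (by simp [hj]))

lemma MemHp.add {p : ℝ} (hp : 0 < p) {f h : ℂ → ℂ} (hf : MemHp p f) (hh : MemHp p h) :
    MemHp p fun z => f z + h z := by
  obtain ⟨h1, K, hK⟩ := hf
  obtain ⟨h2, L, hL⟩ := hh
  refine ⟨h1.add h2, 2 ^ p * K + 2 ^ p * L, fun r hr =>
    (circMean_add_le hp h1.continuousOn h2.continuousOn hr).trans ?_⟩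
  gcongr
  exacts [hK r hr, hL r hr]

lemma MemHp.mul {p : ℝ} (hp : 0 < p) {f k : ℂ → ℂ} (hk : MemHinf k) (hf : MemHp p f) :
    MemHp p fun z => k z * f z := by
  obtain ⟨h1, K, hK⟩ := hf
  obtain ⟨h2, L, hL⟩ := hk
  have hL0 : 0 ≤ L := (norm_nonneg _).trans (hL 0 (by simp [uDisk]))
  refine ⟨h2.mul h1, L ^ p * K, fun r hr =>
    (circMean_mul_le hp h1.continuousOn h2.continuousOn hL hr).trans ?_⟩
  gcongr
  exact hK r hr

lemma MemHp.sub {p : ℝ} (hp : 0 < p) {f h : ℂ → ℂ} (hf : MemHp p f) (hh : MemHp p h) :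
    MemHp p fun z => f z - h z := by
  have := hf.add hp (MemHp.mul hp (MemHinf.const (-1)) hh)
  simpa [sub_eq_add_neg] using this

/-- Convergence in `H^p` of functions of `H^p`, expressed through the integral means. -/
lemma tendsto_hpNorm_iff {p : ℝ} (hp : 0 < p) {d : ℕ → ℂ → ℂ} (hd : ∀ k, MemHp p (d k)) :
    Tendsto (fun k => hpNorm p (d k)) atTop (𝓝 0) ↔
      ∀ ε > 0, ∀ᶠ k in atTop, ∀ r ∈ Ico (0:ℝ) 1, circMean p (d k) r ≤ ε := by
  set S : ℕ → ℝ := fun k => sSup {m : ℝ | ∃ r ∈ Set.Ico (0:ℝ) 1, m = circMean p (d k) r}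
  have hS0 : ∀ k, 0 ≤ S k := fun k => Real.sSup_nonneg (by
    rintro _ ⟨r, -, rfl⟩; exact circMean_nonneg _ _ _)
  have hle : ∀ k, ∀ r ∈ Ico (0:ℝ) 1, circMean p (d k) r ≤ S k := fun k r hr => by
    obtain ⟨-, C, hC⟩ := hd k
    exact le_csSup ⟨C, by rintro _ ⟨r, hr, rfl⟩; exact hC r hr⟩ ⟨r, hr, rfl⟩
  have hiff : Tendsto (fun k => hpNorm p (d k)) atTop (𝓝 0) ↔ Tendsto S atTop (𝓝 0) := by
    constructor
    · intro h
      have h2 := h.rpow_const (p := p) (Or.inr hp.le)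
      rw [Real.zero_rpow hp.ne'] at h2
      refine h2.congr fun k => ?_
      change (S k ^ (1 / p)) ^ p = S k
      rw [← Real.rpow_mul (hS0 k), one_div_mul_cancel hp.ne', Real.rpow_one]
    · intro h
      have h2 := h.rpow_const (p := 1 / p) (Or.inr (by positivity))
      rwa [Real.zero_rpow (by positivity)] at h2
  rw [hiff]
  constructor
  · intro h ε hε
    filter_upwards [h.eventually_lt_const hε] with k hk r hr
    exact (hle k r hr).trans hk.le
  · intro h
    rw [Metric.tendsto_nhds]
    intro ε hε
    filter_upwards [h (ε / 2) (by positivity)] with k hk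
    rw [Real.dist_eq, sub_zero, abs_of_nonneg (hS0 k)]
    refine lt_of_le_of_lt (csSup_le ⟨_, 0, by simp, rfl⟩ ?_) (half_lt_self hε)
    rintro _ ⟨r, hr, rfl⟩
    exact hk r hr

lemma mem_hpClosure_iff {p : ℝ} (hp : 0 < p) {S : Set (ℂ → ℂ)} (hS : ∀ u ∈ S, MemHp p u)
    {f : ℂ → ℂ} :
    f ∈ hpClosure p S ↔ MemHp p f ∧ ∀ ε > 0, ∃ u ∈ S, ∀ r ∈ Ico (0:ℝ) 1,
      circMean p (fun z => f z - u z) r ≤ ε := by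
  constructor
  · rintro ⟨hf, u, hu, ht⟩
    refine ⟨hf, fun ε hε => ?_⟩
    rw [tendsto_hpNorm_iff hp fun k => hf.sub hp (hS _ (hu k))] at ht
    obtain ⟨k, hk⟩ := (ht ε hε).exists
    exact ⟨u k, hu k, hk⟩
  · rintro ⟨hf, h⟩
    choose u hu hle using fun k : ℕ => h (1 / ((k : ℝ) + 1)) (by positivity)
    refine ⟨hf, u, hu, (tendsto_hpNorm_iff hp fun k => hf.sub hp (hS _ (hu k))).2 ?_⟩
    intro ε hε
    filter_upwards [tendsto_one_div_add_atTop_nhds_zero_nat.eventually_lt_const hε] with k hk r hr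
    exact (hle k r hr).trans hk.le

/-! ### The largest `z`-invariant subspace of a closed subspace -/

lemma memHinf_of_mem_algGen2 {F G u : ℂ → ℂ} (hF : MemHinf F) (hG : MemHinf G)
    (hu : u ∈ algGen2 F G) : MemHinf u := by
  obtain ⟨P, hP⟩ := hu
  have hu' : u = fun z => MvPolynomial.eval (fun i => (![F, G] : Fin 2 → ℂ → ℂ) i z) P := funext hP
  rw [hu']
  clear hP hu'
  induction P using MvPolynomial.induction_on with
  | C c => simpa using MemHinf.const c
  | add P Q hP hQ => simpa using hP.add hQ
  | mul_X P i hP =>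
    have hi : MemHinf fun z => (![F, G] : Fin 2 → ℂ → ℂ) i z := by
      fin_cases i
      · simpa using hF
      · simpa using hG
    simpa using hP.mul hi

lemma add_mem_algGen2 {F G u v : ℂ → ℂ} (hu : u ∈ algGen2 F G) (hv : v ∈ algGen2 F G) :
    (fun z => u z + v z) ∈ algGen2 F G := by
  obtain ⟨P, hP⟩ := hu
  obtain ⟨Q, hQ⟩ := hv
  exact ⟨P + Q, fun z => by simp [hP, hQ]⟩

lemma const_mul_mem_algGen2 {F G u : ℂ → ℂ} (c : ℂ) (hu : u ∈ algGen2 F G) :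
    (fun z => c * u z) ∈ algGen2 F G := by
  obtain ⟨P, hP⟩ := hu
  exact ⟨MvPolynomial.C c * P, fun z => by simp [hP]⟩

/-- The functions all of whose multiples by powers of `z` lie in the `H^p`-closure of
`ℂ[F,G]` form a `z`-invariant subspace: the largest one inside that closure. -/
lemma isZInvSubspace_maximal {p : ℝ} (hp : 0 < p) {F G : ℂ → ℂ} (hF : MemHinf F)
    (hG : MemHinf G) :
    IsZInvSubspace p {f | ∀ m : ℕ, (fun z => z ^ m * f z) ∈ hpClosure p (algGen2 F G)} := by
  have hS : ∀ u ∈ algGen2 F G, MemHp p u := fun u hu =>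
    (memHinf_of_mem_algGen2 hF hG hu).memHp hp
  have hM : ∀ f ∈ {f | ∀ m : ℕ, (fun z => z ^ m * f z) ∈ hpClosure p (algGen2 F G)},
      MemHp p f := fun f hf => by simpa using (hf 0).1
  have hz : ∀ m : ℕ, MemHinf fun z => z ^ m := fun m => MemHinf.id.pow m
  refine ⟨hM, fun m => ?_, fun f hf h hh m => ?_, fun c f hf m => ?_, fun f hf m => ?_, ?_⟩
  · rw [mem_hpClosure_iff hp hS]
    simp only [mul_zero]
    refine ⟨(MemHinf.const 0).memHp hp, fun ε hε => ⟨fun _ => 0, ⟨0, by simp⟩, fun r _ => ?_⟩⟩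
    simp only [sub_zero, circMean_const, norm_zero, Real.zero_rpow hp.ne', mul_zero]
    exact hε.le
  · have hf' := (mem_hpClosure_iff hp hS).1 (hf m)
    have hh' := (mem_hpClosure_iff hp hS).1 (hh m)
    refine (mem_hpClosure_iff hp hS).2
      ⟨MemHp.mul hp (hz m) ((hM f hf).add hp (hM h hh)), fun ε hε => ?_⟩
    obtain ⟨u, hu, hu'⟩ := hf'.2 (ε / 2 / 2 ^ p) (by positivity)
    obtain ⟨v, hv, hv'⟩ := hh'.2 (ε / 2 / 2 ^ p) (by positivity)
    refine ⟨_, add_mem_algGen2 hu hv, fun r hr => ?_⟩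
    calc _ = circMean p (fun z => (z ^ m * f z - u z) + (z ^ m * h z - v z)) r := by
          congr 1; ext z; ring
      _ ≤ 2 ^ p * circMean p (fun z => z ^ m * f z - u z) r
          + 2 ^ p * circMean p (fun z => z ^ m * h z - v z) r :=
          circMean_add_le hp (hf'.1.sub hp (hS u hu)).1.continuousOn
            (hh'.1.sub hp (hS v hv)).1.continuousOn hr
      _ ≤ 2 ^ p * (ε / 2 / 2 ^ p) + 2 ^ p * (ε / 2 / 2 ^ p) := by
          gcongr
          exacts [hu' r hr, hv' r hr]
      _ = ε := by field_simp; ring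
  · have hf' := (mem_hpClosure_iff hp hS).1 (hf m)
    refine (mem_hpClosure_iff hp hS).2
      ⟨MemHp.mul hp (hz m) (MemHp.mul hp (MemHinf.const c) (hM f hf)), fun ε hε => ?_⟩
    obtain ⟨u, hu, hu'⟩ := hf'.2 (ε / (‖c‖ ^ p + 1)) (by positivity)
    refine ⟨_, const_mul_mem_algGen2 c hu, fun r hr => ?_⟩
    calc _ = circMean p (fun z => c * (z ^ m * f z - u z)) r := by
          congr 1; ext z; ring
      _ ≤ ‖c‖ ^ p * circMean p (fun z => z ^ m * f z - u z) r :=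
          circMean_mul_le hp (hf'.1.sub hp (hS u hu)).1.continuousOn continuousOn_const
            (fun _ _ => le_rfl) hr
      _ ≤ (‖c‖ ^ p + 1) * (ε / (‖c‖ ^ p + 1)) := by
          have := circMean_nonneg p (fun z => z ^ m * f z - u z) r
          gcongr
          · linarith
          · exact hu' r hr
      _ = ε := by field_simp
  · have := hf (m + 1)
    simpa [pow_succ, mul_assoc] using this
  · rintro f hf ⟨u, hu, ht⟩ m
    rw [tendsto_hpNorm_iff hp fun k => hf.sub hp (hM _ (hu k))] at ht
    refine (mem_hpClosure_iff hp hS).2 ⟨MemHp.mul hp (hz m) hf, fun ε hε => ?_⟩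
    obtain ⟨k, hk⟩ := (ht (ε / 2 / 2 ^ p) (by positivity)).exists
    have hu' := (mem_hpClosure_iff hp hS).1 (hu k m)
    obtain ⟨v, hv, hv'⟩ := hu'.2 (ε / 2 / 2 ^ p) (by positivity)
    refine ⟨v, hv, fun r hr => ?_⟩
    have hfu := (hf.sub hp (hM _ (hu k)))
    calc _ = circMean p (fun z => z ^ m * (f z - u k z) + (z ^ m * u k z - v z)) r := by
          congr 1; ext z; ring
      _ ≤ 2 ^ p * circMean p (fun z => z ^ m * (f z - u k z)) r
          + 2 ^ p * circMean p (fun z => z ^ m * u k z - v z) r :=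
          circMean_add_le hp (MemHp.mul hp (hz m) hfu).1.continuousOn
            (hu'.1.sub hp (hS v hv)).1.continuousOn hr
      _ ≤ 2 ^ p * (ε / 2 / 2 ^ p) + 2 ^ p * (ε / 2 / 2 ^ p) := by
          gcongr
          · refine (circMean_mul_le hp (K := 1) hfu.1.continuousOn (hz m).1.continuousOn
              (fun z hz => ?_) hr).trans ?_
            · rw [norm_pow]
              exact pow_le_one₀ (norm_nonneg _) (by simpa using (mem_ball_zero_iff.1 hz).le)
            · simpa using hk r hr
          · exact hv' r hr
      _ = ε := by field_simp; ring

/-! ### Point evaluations on `H^p` -/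

/-- `‖f‖ ^ p` is subharmonic for every `p > 0`: exponentiate Jensen's inequality for
`log ‖f‖`, using the tangent line of `exp` at `p * log ‖f c‖`. -/
lemma norm_rpow_le_circleAverage {p : ℝ} (hp : 0 < p) {f : ℂ → ℂ} {c : ℂ} {s : ℝ} (hs : 0 < s)
    (hf : AnalyticOnNhd ℂ f (closedBall c s)) :
    ‖f c‖ ^ p ≤ Real.circleAverage (fun z => ‖f z‖ ^ p) c s := by
  rcases eq_or_ne (f c) 0 with h0 | h0
  · rw [h0, norm_zero, Real.zero_rpow hp.ne']
    exact Real.circleAverage_nonneg_of_nonneg fun x _ => by positivity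
  have hf' : AnalyticOnNhd ℂ f (closedBall c |s|) := by rwa [abs_of_pos hs]
  have hlog : CircleIntegrable (fun z => Real.log ‖f z‖) c s :=
    (hf'.mono sphere_subset_closedBall).meromorphicOn.circleIntegrable_log_norm
  have hjensen : Real.log ‖f c‖ ≤ Real.circleAverage (fun z => Real.log ‖f z‖) c s := by
    rw [hf'.circleAverage_log_norm hs.ne' h0]
    suffices h : 0 ≤ ∑ᶠ u, (MeromorphicOn.divisor f (closedBall c |s|) u : ℝ)
        * Real.log (s * ‖c - u‖⁻¹) by linarith
    refine finsum_nonneg fun u => ?_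
    by_cases hu : u ∈ closedBall c |s|
    · refine mul_nonneg (mod_cast MeromorphicOn.AnalyticOnNhd.divisor_nonneg hf' u) ?_
      rcases eq_or_ne c u with rfl | hcu
      · simp
      · have hpos : 0 < ‖c - u‖ := norm_pos_iff.2 (sub_ne_zero.2 hcu)
        refine Real.log_nonneg ?_
        rw [← div_eq_mul_inv, le_div_iff₀ hpos, one_mul, ← dist_eq_norm, dist_comm]
        rwa [abs_of_pos hs, mem_closedBall] at hu
    · simp [hu]
  have hcod : (fun z => ‖f z‖ ^ p) =ᶠ[codiscreteWithin (sphere c |s|)]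
      fun z => Real.exp (p * Real.log ‖f z‖) := by
    have h1 := (hf'.eqOn_zero_or_eventually_ne_zero_of_preconnected
      (convex_closedBall c |s|).isPreconnected).resolve_left
      fun h => h0 (h (mem_closedBall_self (abs_nonneg s)))
    filter_upwards [h1.filter_mono (codiscreteWithin_mono sphere_subset_closedBall)] with z hz
    rw [Real.rpow_def_of_pos (norm_pos_iff.2 hz), mul_comm]
  have hcont : CircleIntegrable (fun z => ‖f z‖ ^ p) c s := by
    refine ContinuousOn.circleIntegrable hs.le ?_
    exact (hf.continuousOn.mono sphere_subset_closedBall).norm.rpow_const fun _ _ => Or.inr hp.le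
  set A := Real.log ‖f c‖
  have hexpint := hcont.congr_codiscreteWithin hcod
  rw [Real.circleAverage_congr_codiscreteWithin hcod hs.ne']
  have hmono : Real.circleAverage
      (fun z => Real.exp (p * A) * (1 - p * A) + (Real.exp (p * A) * p) • Real.log ‖f z‖) c s
      ≤ Real.circleAverage (fun z => Real.exp (p * Real.log ‖f z‖)) c s := by
    refine Real.circleAverage_mono ?_ hexpint fun z _ => ?_
    · exact (circleIntegrable_const _ _ _).add hlog.const_smul
    · have h1 := Real.add_one_le_exp (p * Real.log ‖f z‖ - p * A)
      have h2 : Real.exp (p * Real.log ‖f z‖)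
          = Real.exp (p * A) * Real.exp (p * Real.log ‖f z‖ - p * A) := by
        rw [← Real.exp_add]; ring_nf
      rw [h2, smul_eq_mul]
      have h3 := mul_le_mul_of_nonneg_left h1 (Real.exp_pos (p * A)).le
      linarith
  have hlog2 : CircleIntegrable (fun z => (Real.exp (p * A) * p) • Real.log ‖f z‖) c s :=
    hlog.const_smul
  rw [Real.circleAverage_fun_add (circleIntegrable_const _ _ _) hlog2,
    Real.circleAverage_const, Real.circleAverage_fun_smul, smul_eq_mul] at hmono
  have h4 : ‖f c‖ ^ p = Real.exp (p * A) := by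
    rw [Real.rpow_def_of_pos (norm_pos_iff.2 h0), mul_comm]
  rw [h4]
  have h5 := mul_le_mul_of_nonneg_left hjensen (mul_pos (Real.exp_pos (p * A)) hp).le
  linarith

lemma lintegral_ball_polar (c : ℂ) (δ : ℝ) {h : ℂ → ENNReal} (hm : Measurable h) :
    ∫⁻ z in ball c δ, h z = ∫⁻ r in Ioo 0 δ, ENNReal.ofReal r *
      ∫⁻ θ in Ioo (-Real.pi) Real.pi, h (circleMap c r θ) := by
  have hm2 : Measurable ((ball c δ).indicator h) := hm.indicator measurableSet_ball
  rw [← lintegral_indicator measurableSet_ball, ← lintegral_add_right_eq_self _ c,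
    ← Complex.lintegral_comp_polarCoord_symm, polarCoord_target, Measure.volume_eq_prod,
    ← Measure.prod_restrict, lintegral_prod]
  · rw [← lintegral_indicator measurableSet_Ioi, ← lintegral_indicator measurableSet_Ioo]
    congr 1
    ext r
    by_cases h0 : 0 < r
    swap
    · simp [h0]
    rw [indicator_of_mem (show r ∈ Ioi (0:ℝ) from h0)]
    have hpt : ∀ θ : ℝ, Complex.polarCoord.symm (r, θ) + c = circleMap c r θ := fun θ => by
      simp [circleMap, Complex.exp_mul_I, add_comm]
    simp only [hpt, smul_eq_mul]
    by_cases h1 : r < δ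
    · rw [indicator_of_mem (show r ∈ Ioo 0 δ from ⟨h0, h1⟩), lintegral_const_mul']
      · congr 1
        refine lintegral_congr fun θ => indicator_of_mem ?_ _
        simp [circleMap, abs_of_pos h0, h1, Complex.norm_exp_ofReal_mul_I]
      · exact ENNReal.ofReal_ne_top
    · rw [indicator_of_notMem (by simp [h1])]
      refine (lintegral_congr fun θ => ?_).trans lintegral_zero
      rw [indicator_of_notMem, mul_zero]
      simpa [circleMap, abs_of_pos h0, Complex.norm_exp_ofReal_mul_I] using h1
  · refine Measurable.aemeasurable ?_
    refine (ENNReal.measurable_ofReal.comp measurable_fst).smul (hm2.comp ?_)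
    refine Measurable.add_const ?_ c
    have hpc : (Complex.polarCoord.symm : ℝ × ℝ → ℂ)
        = fun q => (q.1 : ℂ) * (Real.cos q.2 + Real.sin q.2 * Complex.I) :=
      funext fun q => Complex.polarCoord_symm_apply q
    rw [hpc]
    fun_prop

/-- Point evaluations are bounded on `H^p`: integrate subharmonicity of `‖f‖ ^ p` over a disk
around `z`, and bound the area integral over the unit disk by the integral means. -/
lemma norm_rpow_le_of_circMean_le {p : ℝ} (hp : 0 < p) {f : ℂ → ℂ}
    (hf : DifferentiableOn ℂ f uDisk) {z : ℂ} (hz : z ∈ uDisk) {ε : ℝ}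
    (hε : ∀ r ∈ Ico (0:ℝ) 1, circMean p f r ≤ ε) :
    (1 - ‖z‖) ^ 2 * ‖f z‖ ^ p ≤ ε := by
  have hε0 : 0 ≤ ε := (circMean_nonneg p f 0).trans (hε 0 (by simp))
  set δ := 1 - ‖z‖ with hδ
  have hδ0 : 0 < δ := by
    have := mem_ball_zero_iff.1 hz
    linarith
  have hsub : ball z δ ⊆ uDisk := by
    refine ball_subset_ball' ?_
    rw [dist_zero_right]; linarith
  set h : ℂ → ENNReal := uDisk.indicator fun w => ENNReal.ofReal (‖f w‖ ^ p) with hh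
  have hcp : ContinuousOn (fun w => ‖f w‖ ^ p) uDisk :=
    hf.continuousOn.norm.rpow_const fun _ _ => Or.inr hp.le
  have hm : Measurable h := by
    have := ContinuousOn.measurable_piecewise (s := uDisk)
      (f := fun w => ENNReal.ofReal (‖f w‖ ^ p)) (g := (0 : ℂ → ENNReal))
      (ENNReal.continuous_ofReal.comp_continuousOn hcp) continuousOn_const
      measurableSet_ball
    rwa [Set.piecewise_eq_indicator] at this
  -- the angular integral of `h` on a circle inside the unit disk
  have hang : ∀ (c : ℂ) (r : ℝ), (∀ θ, circleMap c r θ ∈ uDisk) →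
      ∫⁻ θ in Ioo (-Real.pi) Real.pi, h (circleMap c r θ)
        = ENNReal.ofReal (∫ θ in (0:ℝ)..(2 * Real.pi), ‖f (circleMap c r θ)‖ ^ p) := by
    intro c r hc
    have hcont : Continuous fun θ => ‖f (circleMap c r θ)‖ ^ p :=
      hcp.comp_continuous (continuous_circleMap c r) hc
    have hper : Function.Periodic (fun θ => ‖f (circleMap c r θ)‖ ^ p) (2 * Real.pi) := by
      intro θ
      simp only [periodic_circleMap c r θ]
    have h1 := hper.intervalIntegral_add_eq 0 (-Real.pi)
    rw [zero_add, show -Real.pi + 2 * Real.pi = Real.pi by ring] at h1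
    rw [h1, intervalIntegral.integral_of_le (by linarith [Real.pi_pos]),
      integral_Ioc_eq_integral_Ioo, ofReal_integral_eq_lintegral_ofReal]
    · refine lintegral_congr fun θ => ?_
      rw [hh, indicator_of_mem (hc θ)]
    · exact (hcont.integrableOn_Icc).mono_set Ioo_subset_Icc_self
    · exact ae_of_all _ fun θ => by positivity
  have hup : ∫⁻ w in uDisk, h w ≤ ENNReal.ofReal ε := by
    rw [uDisk, lintegral_ball_polar 0 1 hm]
    calc _ ≤ ∫⁻ r in Ioo (0:ℝ) 1, ENNReal.ofReal ε := by
          refine setLIntegral_mono measurable_const fun r hr => ?_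
          have hr' : r ∈ Ico (0:ℝ) 1 := ⟨hr.1.le, hr.2⟩
          rw [hang 0 r fun θ => by simpa [circleMap] using circPt_mem hr' θ,
            ← ENNReal.ofReal_mul hr.1.le]
          refine ENNReal.ofReal_le_ofReal ?_
          have h1 := hε r hr'
          have h2 := circMean_nonneg p f r
          simp only [circMean] at h1 h2
          simp only [circleMap, zero_add]
          nlinarith [hr.1, hr.2]
      _ = ENNReal.ofReal ε := by simp
  have hlow : ENNReal.ofReal (δ ^ 2 * ‖f z‖ ^ p) ≤ ∫⁻ w in ball z δ, h w := by
    rw [lintegral_ball_polar z δ hm]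
    calc _ ≤ ∫⁻ r in Ioo (δ / 2) δ, ENNReal.ofReal (δ / 2 * (2 * Real.pi * ‖f z‖ ^ p)) := by
          rw [setLIntegral_const, Real.volume_Ioo, ← ENNReal.ofReal_mul (by positivity)]
          refine ENNReal.ofReal_le_ofReal ?_
          have h1 : 0 ≤ δ ^ 2 * ‖f z‖ ^ p := by positivity
          have h2 := Real.pi_gt_three
          nlinarith
      _ ≤ ∫⁻ r in Ioo (δ / 2) δ, ENNReal.ofReal r *
            ∫⁻ θ in Ioo (-Real.pi) Real.pi, h (circleMap z r θ) := by
          refine setLIntegral_mono' measurableSet_Ioo fun r hr => ?_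
          have hr0 : 0 < r := by linarith [hr.1]
          have hcb : closedBall z r ⊆ uDisk := (closedBall_subset_ball hr.2).trans hsub
          rw [hang z r fun θ => hcb (circleMap_mem_closedBall z hr0.le θ),
            ← ENNReal.ofReal_mul hr0.le]
          refine ENNReal.ofReal_le_ofReal ?_
          have h1 := norm_rpow_le_circleAverage hp hr0
            ((hf.analyticOnNhd isOpen_ball).mono hcb)
          rw [Real.circleAverage_def, smul_eq_mul, ← div_eq_inv_mul,
            le_div_iff₀ (by positivity)] at h1
          have h2 : 0 ≤ ‖f z‖ ^ p * (2 * Real.pi) := by positivity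
          nlinarith [hr.1]
      _ ≤ _ := lintegral_mono_set (Ioo_subset_Ioo_left (by linarith))
  have := hlow.trans ((lintegral_mono_set hsub).trans hup)
  rwa [ENNReal.ofReal_le_ofReal_iff hε0] at this

/-- An identity `u x = u y` between two point values passes to the `H^p`-closure. -/
lemma eq_of_mem_hpClosure {p : ℝ} (hp : 0 < p) {S : Set (ℂ → ℂ)} (hS : ∀ u ∈ S, MemHp p u)
    {f : ℂ → ℂ} (hf : f ∈ hpClosure p S) {x y : ℂ} (hx : x ∈ uDisk) (hy : y ∈ uDisk)
    (hxy : ∀ u ∈ S, u x = u y) : f x = f y := by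
  obtain ⟨hfm, happ⟩ := (mem_hpClosure_iff hp hS).1 hf
  have hpos : ∀ w ∈ uDisk, 0 < (1 - ‖w‖) ^ 2 := fun w hw => by
    have := mem_ball_zero_iff.1 hw
    have : 0 < 1 - ‖w‖ := by linarith
    positivity
  by_contra hne
  have hd : 0 < ‖f x - f y‖ ^ p := by
    have := norm_pos_iff.2 (sub_ne_zero.2 hne)
    positivity
  set α := 2 ^ p / (1 - ‖x‖) ^ 2 + 2 ^ p / (1 - ‖y‖) ^ 2 with hα
  have hα0 : 0 < α := by
    have := hpos x hx
    have := hpos y hy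
    positivity
  obtain ⟨u, hu, hle⟩ := happ (‖f x - f y‖ ^ p / (2 * α)) (by positivity)
  have hdiff : DifferentiableOn ℂ (fun z => f z - u z) uDisk := hfm.1.sub (hS u hu).1
  have h1 := norm_rpow_le_of_circMean_le hp hdiff hx hle
  have h2 := norm_rpow_le_of_circMean_le hp hdiff hy hle
  rw [mul_comm, ← le_div_iff₀ (hpos x hx)] at h1
  rw [mul_comm, ← le_div_iff₀ (hpos y hy)] at h2
  have h3 := norm_add_rpow_le hp (f x - u x) (-(f y - u y))
  rw [norm_neg, show f x - u x + -(f y - u y) = f x - f y by rw [hxy u hu]; ring] at h3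
  have h4 : ‖f x - f y‖ ^ p ≤ α * (‖f x - f y‖ ^ p / (2 * α)) := by
    refine h3.trans ?_
    calc _ ≤ 2 ^ p * (‖f x - f y‖ ^ p / (2 * α) / (1 - ‖x‖) ^ 2)
          + 2 ^ p * (‖f x - f y‖ ^ p / (2 * α) / (1 - ‖y‖) ^ 2) := by gcongr
      _ = _ := by rw [hα]; ring
  have h5 : α * (‖f x - f y‖ ^ p / (2 * α)) = ‖f x - f y‖ ^ p / 2 := by field_simp
  linarith

/-! ### Littlewood subordination in `H²` and approximation by polynomials in `b` -/

lemma circMean_le_of_circle {p : ℝ} (hp : 0 < p) {f : ℂ → ℂ} (hf : ContinuousOn f uDisk) {K : ℝ}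
    {r : ℝ} (hr : r ∈ Ico (0:ℝ) 1) (hK : ∀ z, ‖z‖ = r → ‖f z‖ ≤ K) :
    circMean p f r ≤ 2 * Real.pi * K ^ p := by
  have h := intervalIntegral.integral_mono_on (a := 0) (b := 2 * Real.pi) (by positivity)
    ((continuous_circMean_integrand hp hf hr).intervalIntegrable (μ := volume) _ _)
    (intervalIntegrable_const (c := K ^ p)) fun θ _ => by
      refine Real.rpow_le_rpow (norm_nonneg _) (hK _ ?_) hp.le
      simp [Complex.norm_exp_ofReal_mul_I, abs_of_nonneg hr.1]
  simpa [circMean] using h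

lemma integral_circPt {F : ℂ → ℂ} (hF : DifferentiableOn ℂ F uDisk) {r : ℝ}
    (hr : r ∈ Ico (0:ℝ) 1) :
    ∫ θ in (0:ℝ)..(2 * Real.pi), F ((r : ℂ) * Complex.exp ((θ : ℂ) * Complex.I))
      = 2 * Real.pi * F 0 := by
  have hsub : closedBall (0:ℂ) |r| ⊆ uDisk := by
    rw [abs_of_nonneg hr.1]
    exact closedBall_subset_ball hr.2
  have h := (DifferentiableOn.diffContOnCl_ball hF hsub).circleAverage
  rw [Real.circleAverage_def] at h
  simp only [circleMap, zero_add] at h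
  rw [← h, Complex.real_smul]
  push_cast
  rw [mul_inv_cancel_left₀]
  simp

/-- Constants are orthogonal in `H²` to the functions vanishing at the origin. -/
lemma circMean_two_const_add {F : ℂ → ℂ} (hF : DifferentiableOn ℂ F uDisk) (h0 : F 0 = 0)
    (α : ℂ) {r : ℝ} (hr : r ∈ Ico (0:ℝ) 1) :
    circMean 2 (fun z => F z + α) r = circMean 2 F r + 2 * Real.pi * ‖α‖ ^ 2 := by
  have hc := continuous_comp_circPt hF.continuousOn hr
  have h1 := continuous_circMean_integrand zero_lt_two hF.continuousOn hr
  have hcross : ∫ θ in (0:ℝ)..(2 * Real.pi),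
      (F ((r : ℂ) * Complex.exp ((θ : ℂ) * Complex.I)) * (starRingEnd ℂ) α).re = 0 := by
    have h2 := integral_circPt hF hr
    rw [h0, mul_zero] at h2
    have h3 := intervalIntegral.integral_mul_const (a := 0) (b := 2 * Real.pi) (μ := volume)
      ((starRingEnd ℂ) α) (fun θ : ℝ => F ((r : ℂ) * Complex.exp ((θ : ℂ) * Complex.I)))
    rw [h2, zero_mul] at h3
    have hintg : IntervalIntegrable (fun θ : ℝ => F ((r : ℂ) * Complex.exp ((θ : ℂ) * Complex.I))
        * (starRingEnd ℂ) α) volume 0 (2 * Real.pi) :=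
      (hc.mul continuous_const).intervalIntegrable _ _
    have h4 := Complex.reCLM.intervalIntegral_comp_comm hintg
    rw [h3] at h4
    simpa using h4
  unfold circMean
  have hexp : ∀ θ : ℝ, ‖F ((r : ℂ) * Complex.exp ((θ : ℂ) * Complex.I)) + α‖ ^ (2:ℝ)
      = ‖F ((r : ℂ) * Complex.exp ((θ : ℂ) * Complex.I))‖ ^ (2:ℝ) + ‖α‖ ^ 2
        + 2 * (F ((r : ℂ) * Complex.exp ((θ : ℂ) * Complex.I)) * (starRingEnd ℂ) α).re := by
    intro θ
    rw [Real.rpow_two, Real.rpow_two, Complex.sq_norm, Complex.sq_norm, Complex.sq_norm,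
      Complex.normSq_add]
  simp only [hexp]
  rw [intervalIntegral.integral_add, intervalIntegral.integral_add,
    intervalIntegral.integral_const_mul, hcross]
  · simp
  · exact h1.intervalIntegrable _ _
  · exact intervalIntegrable_const
  · exact (h1.add continuous_const).intervalIntegrable _ _
  · refine Continuous.intervalIntegrable ?_ _ _
    exact continuous_const.mul (Complex.continuous_re.comp (hc.mul continuous_const))

/-- Littlewood's subordination inequality for polynomials in `b`, by Horner's scheme. -/
lemma circMean_two_sum_le {b : ℂ → ℂ} (hb : DifferentiableOn ℂ b uDisk)
    (hb1 : ∀ z ∈ uDisk, ‖b z‖ ≤ 1) (hb0 : b 0 = 0) {r : ℝ} (hr : r ∈ Ico (0:ℝ) 1) (N : ℕ) :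
    ∀ c : ℕ → ℂ, circMean 2 (fun z => ∑ k ∈ Finset.range N, c k * b z ^ k) r
      ≤ 2 * Real.pi * ∑ k ∈ Finset.range N, ‖c k‖ ^ 2 := by
  induction N with
  | zero => intro c; simp [circMean]
  | succ N ih =>
    intro c
    have hd : DifferentiableOn ℂ (fun z => ∑ k ∈ Finset.range N, c (k + 1) * b z ^ k) uDisk :=
      DifferentiableOn.fun_sum fun k _ => (hb.pow k).const_mul _
    have heq : (fun z => ∑ k ∈ Finset.range (N + 1), c k * b z ^ k)
        = fun z => (b z * ∑ k ∈ Finset.range N, c (k + 1) * b z ^ k) + c 0 := by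
      ext z
      rw [Finset.sum_range_succ', Finset.mul_sum]
      simp only [pow_zero, mul_one]
      congr 1
      exact Finset.sum_congr rfl fun k _ => by ring
    rw [heq, circMean_two_const_add (hb.fun_mul hd) (by simp [hb0]) _ hr, Finset.sum_range_succ',
      mul_add]
    have h1 := circMean_mul_le zero_lt_two hd.continuousOn hb.continuousOn hb1 hr
    rw [Real.one_rpow, one_mul] at h1
    linarith [ih fun k => c (k + 1)]

lemma circMean_two_sum_eq {r : ℝ} (hr : r ∈ Ico (0:ℝ) 1) (N : ℕ) :
    ∀ c : ℕ → ℂ, circMean 2 (fun z => ∑ k ∈ Finset.range N, c k * z ^ k) r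
      = 2 * Real.pi * ∑ k ∈ Finset.range N, ‖c k‖ ^ 2 * (r ^ 2) ^ k := by
  induction N with
  | zero => intro c; simp [circMean]
  | succ N ih =>
    intro c
    have hd : DifferentiableOn ℂ (fun z : ℂ => ∑ k ∈ Finset.range N, c (k + 1) * z ^ k) uDisk :=
      DifferentiableOn.fun_sum fun k _ => (differentiableOn_id.pow k).const_mul _
    have heq : (fun z : ℂ => ∑ k ∈ Finset.range (N + 1), c k * z ^ k)
        = fun z => (z * ∑ k ∈ Finset.range N, c (k + 1) * z ^ k) + c 0 := by
      ext z
      rw [Finset.sum_range_succ', Finset.mul_sum]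
      simp only [pow_zero, mul_one]
      congr 1
      exact Finset.sum_congr rfl fun k _ => by ring
    rw [heq, circMean_two_const_add
      (F := fun z => z * ∑ k ∈ Finset.range N, c (k + 1) * z ^ k)
      (differentiableOn_id.mul hd) (by simp) _ hr,
      Finset.sum_range_succ', mul_add]
    have h1 : circMean 2 (fun z : ℂ => z * ∑ k ∈ Finset.range N, c (k + 1) * z ^ k) r
        = r ^ 2 * circMean 2 (fun z : ℂ => ∑ k ∈ Finset.range N, c (k + 1) * z ^ k) r := by
      unfold circMean
      rw [← intervalIntegral.integral_const_mul]
      congr 1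
      ext θ
      rw [norm_mul, Real.mul_rpow (norm_nonneg _) (norm_nonneg _)]
      congr 1
      simp [Complex.norm_exp_ofReal_mul_I]
    rw [h1, ih, Finset.mul_sum, Finset.mul_sum, Finset.mul_sum]
    simp only [pow_zero, mul_one]
    congr 1
    exact Finset.sum_congr rfl fun k _ => by ring

/-- A power series converging on the disk converges uniformly on smaller disks. -/
lemma exists_partial_sum_close {c : ℕ → ℂ} {h : ℂ → ℂ}
    (hc : ∀ z ∈ uDisk, HasSum (fun k => c k * z ^ k) (h z)) {r : ℝ} (hr : r ∈ Ico (0:ℝ) 1)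
    {ε : ℝ} (hε : 0 < ε) :
    ∃ N₀, ∀ N ≥ N₀, ∀ z, ‖z‖ ≤ r → ‖h z - ∑ k ∈ Finset.range N, c k * z ^ k‖ ≤ ε := by
  have hs : Summable fun k => ‖c k‖ * r ^ k := by
    have h1 := (hc (r : ℂ) (by simpa [uDisk, abs_of_nonneg hr.1] using hr.2)).summable.norm
    simpa [abs_of_nonneg hr.1] using h1
  obtain ⟨N₀, hN₀⟩ := eventually_atTop.1
    ((tendsto_sum_nat_add fun k => ‖c k‖ * r ^ k).eventually (ge_mem_nhds hε))
  refine ⟨N₀, fun N hN z hz => ?_⟩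
  have hz1 : z ∈ uDisk := by
    rw [uDisk, mem_ball_zero_iff]
    exact hz.trans_lt hr.2
  have h2 := hc z hz1
  rw [← h2.tsum_eq, ← h2.summable.sum_add_tsum_nat_add N, add_sub_cancel_left]
  refine (tsum_of_norm_bounded (((summable_nat_add_iff N).2 hs).hasSum) fun k => ?_).trans
    (hN₀ N hN)
  rw [norm_mul, norm_pow]
  gcongr

lemma sum_sq_le_of_bdd {c : ℕ → ℂ} {h : ℂ → ℂ}
    (hc : ∀ z ∈ uDisk, HasSum (fun k => c k * z ^ k) (h z)) (hd : DifferentiableOn ℂ h uDisk)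
    {K : ℝ} (hK : ∀ z ∈ uDisk, ‖h z‖ ≤ K) (N : ℕ) :
    ∑ k ∈ Finset.range N, ‖c k‖ ^ 2 ≤ 4 * K ^ 2 + 4 := by
  have hr' : ∀ r ∈ Ico (0:ℝ) 1,
      ∑ k ∈ Finset.range N, ‖c k‖ ^ 2 * (r ^ 2) ^ k ≤ 4 * K ^ 2 + 4 := by
    intro r hr
    obtain ⟨N₀, hN₀⟩ := exists_partial_sum_close hc hr one_pos
    set M := max N N₀
    have hsd : DifferentiableOn ℂ (fun z : ℂ => ∑ k ∈ Finset.range M, c k * z ^ k) uDisk :=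
      DifferentiableOn.fun_sum fun k _ => (differentiableOn_id.pow k).const_mul _
    have h1 := circMean_two_sum_eq hr M c
    have h2 := circMean_add_le zero_lt_two hd.continuousOn (hsd.sub hd).continuousOn hr
    have h3 := circMean_le_of_bdd zero_lt_two hd.continuousOn hK hr
    have h4 := circMean_le_of_circle (K := 1) zero_lt_two (hsd.sub hd).continuousOn hr fun z hz => by
      simpa [norm_sub_rev] using hN₀ M (le_max_right _ _) z hz.le
    simp only [Pi.sub_apply, add_sub_cancel, h1, Real.rpow_two] at h2 h3 h4
    have h5 : ∑ k ∈ Finset.range N, ‖c k‖ ^ 2 * (r ^ 2) ^ k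
        ≤ ∑ k ∈ Finset.range M, ‖c k‖ ^ 2 * (r ^ 2) ^ k :=
      Finset.sum_le_sum_of_subset_of_nonneg
        (Finset.range_mono (le_max_left _ _)) fun _ _ _ => by positivity
    refine h5.trans (le_of_mul_le_mul_left ?_ Real.two_pi_pos)
    norm_num at h2 h4
    linarith
  have hcont : Continuous fun r : ℝ => ∑ k ∈ Finset.range N, ‖c k‖ ^ 2 * (r ^ 2) ^ k := by
    fun_prop
  have ht : Tendsto (fun r : ℝ => ∑ k ∈ Finset.range N, ‖c k‖ ^ 2 * (r ^ 2) ^ k)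
      (𝓝[<] 1) (𝓝 (∑ k ∈ Finset.range N, ‖c k‖ ^ 2)) := by
    have := (hcont.tendsto 1).mono_left (nhdsWithin_le_nhds (s := Iio 1))
    simpa using this
  refine le_of_tendsto ht ?_
  filter_upwards [Ico_mem_nhdsLT (zero_lt_one' ℝ)] with r hr using hr' r hr

/-- Littlewood's subordination inequality, up to a constant. -/
lemma circMean_two_comp_le {b : ℂ → ℂ} (hb : DifferentiableOn ℂ b uDisk)
    (hb1 : ∀ z ∈ uDisk, b z ∈ uDisk) (hb0 : b 0 = 0) {c : ℕ → ℂ} {h : ℂ → ℂ}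
    (hc : ∀ z ∈ uDisk, HasSum (fun k => c k * z ^ k) (h z)) (hd : DifferentiableOn ℂ h uDisk)
    {S : ℝ} (hS : ∀ N, ∑ k ∈ Finset.range N, ‖c k‖ ^ 2 ≤ S) {r : ℝ} (hr : r ∈ Ico (0:ℝ) 1) :
    circMean 2 (fun z => h (b z)) r ≤ 8 * Real.pi * S := by
  have hle : ∀ z ∈ uDisk, ‖b z‖ ≤ 1 := fun z hz => (mem_ball_zero_iff.1 (hb1 z hz)).le
  have hhb : DifferentiableOn ℂ (fun z => h (b z)) uDisk := hd.comp hb hb1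
  have key : ∀ ε : ℝ, 0 < ε → circMean 2 (fun z => h (b z)) r
      ≤ 8 * Real.pi * S + 8 * Real.pi * ε ^ 2 := by
    intro ε hε
    obtain ⟨N, hN⟩ := exists_partial_sum_close hc hr hε
    have hsd : DifferentiableOn ℂ (fun z : ℂ => ∑ k ∈ Finset.range N, c k * b z ^ k) uDisk :=
      DifferentiableOn.fun_sum fun k _ => (hb.pow k).const_mul _
    have h1 := circMean_two_sum_le hb hle hb0 hr N c
    have h2 := circMean_add_le zero_lt_two hsd.continuousOn (hhb.sub hsd).continuousOn hr
    have h4 := circMean_le_of_circle (K := ε) zero_lt_two (hhb.sub hsd).continuousOn hr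
      fun z hz => hN N le_rfl (b z) ((norm_le_norm_of_mapsTo_ball hb
        (fun w hw => ball_subset_closedBall (hb1 w hw)) hb0 (by rw [hz]; exact hr.2)).trans_eq hz)
    simp only [Pi.sub_apply, add_sub_cancel, Real.rpow_two] at h2 h4
    have h5 := mul_le_mul_of_nonneg_left (hS N) Real.two_pi_pos.le
    norm_num at h2 h4
    linarith
  refine le_of_forall_pos_le_add fun δ hδ => ?_
  have := key (Real.sqrt (δ / (8 * Real.pi))) (by positivity)
  rw [Real.sq_sqrt (by positivity), mul_div_cancel₀ _ (by positivity)] at this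
  exact this

/-- For a self-map `b` of the disk fixing `0` and a bounded holomorphic `h`, the function
`h ∘ b` is approximated in `H²` by uniformly bounded polynomials in `b`: first dilate `h`,
then truncate its Taylor series. -/
lemma exists_poly_approx {b : ℂ → ℂ} (hb : DifferentiableOn ℂ b uDisk)
    (hb1 : ∀ z ∈ uDisk, b z ∈ uDisk) (hb0 : b 0 = 0) {h : ℂ → ℂ}
    (hd : DifferentiableOn ℂ h uDisk) {K : ℝ} (hK : ∀ z ∈ uDisk, ‖h z‖ ≤ K) {ε : ℝ}
    (hε : 0 < ε) :
    ∃ P : ℂ[X], (∀ z ∈ uDisk, ‖P.eval z‖ ≤ K + 1) ∧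
      ∀ r ∈ Ico (0:ℝ) 1, circMean 2 (fun z => h (b z) - P.eval (b z)) r ≤ ε := by
  obtain ⟨c, hc⟩ : ∃ c : ℕ → ℂ, ∀ z ∈ uDisk, HasSum (fun k => c k * z ^ k) (h z) := by
    refine ⟨fun k => (k.factorial : ℂ)⁻¹ * iteratedDeriv k h 0, fun z hz => ?_⟩
    have := Complex.hasSum_taylorSeries_on_ball (c := 0) (r := 1) (f := h) (z := z)
      (by simpa [uDisk] using hd) (by simpa [uDisk] using hz)
    have heq : (fun k => (k.factorial : ℂ)⁻¹ • (z - 0) ^ k • iteratedDeriv k h 0)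
        = fun k => (k.factorial : ℂ)⁻¹ * iteratedDeriv k h 0 * z ^ k := by
      ext k
      simp only [sub_zero, smul_eq_mul]
      ring
    rwa [heq] at this
  have hsum : Summable fun k => ‖c k‖ ^ 2 :=
    summable_of_sum_range_le (fun _ => by positivity) (sum_sq_le_of_bdd hc hd hK)
  set δ := ε / (64 * Real.pi) with hδ
  have hδ0 : 0 < δ := by positivity
  obtain ⟨ρ, hρ, hρS⟩ : ∃ ρ ∈ Ico (0:ℝ) 1, ∑' k, ‖c k * (1 - (ρ : ℂ) ^ k)‖ ^ 2 ≤ δ := by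
    have ht : Tendsto (fun ρ : ℝ => ∑' k, ‖c k * (1 - (ρ : ℂ) ^ k)‖ ^ 2) (𝓝[<] 1)
        (𝓝 (∑' _ : ℕ, (0 : ℝ))) := by
      refine tendsto_tsum_of_dominated_convergence hsum (fun k => ?_) ?_
      · have hcont : Continuous fun ρ : ℝ => ‖c k * (1 - (ρ : ℂ) ^ k)‖ ^ 2 := by fun_prop
        have := (hcont.tendsto 1).mono_left (nhdsWithin_le_nhds (s := Iio 1))
        simpa using this
      · filter_upwards [Ico_mem_nhdsLT (zero_lt_one' ℝ)] with ρ hρ k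
        have h1 : ‖(1 : ℂ) - (ρ : ℂ) ^ k‖ ≤ 1 := by
          have h2 : (1 : ℂ) - (ρ : ℂ) ^ k = ((1 - ρ ^ k : ℝ) : ℂ) := by push_cast; rfl
          rw [h2, Complex.norm_real, Real.norm_eq_abs, abs_le]
          have h3 : 0 ≤ ρ ^ k := pow_nonneg hρ.1 k
          have h4 : ρ ^ k ≤ 1 := pow_le_one₀ hρ.1 hρ.2.le
          constructor <;> linarith
        rw [Real.norm_of_nonneg (by positivity), norm_mul, mul_pow]
        have h5 : ‖(1 : ℂ) - (ρ : ℂ) ^ k‖ ^ 2 ≤ 1 := pow_le_one₀ (norm_nonneg _) h1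
        have h6 : 0 ≤ ‖c k‖ ^ 2 := by positivity
        nlinarith
    rw [tsum_zero] at ht
    obtain ⟨ρ, h1, h2⟩ := ((ht.eventually (ge_mem_nhds hδ0)).and
      (Ico_mem_nhdsLT (zero_lt_one' ℝ))).exists
    exact ⟨ρ, h2, h1⟩
  have hρm : ∀ z ∈ uDisk, (ρ : ℂ) * z ∈ uDisk ∧ ‖(ρ : ℂ) * z‖ ≤ ρ := fun z hz => by
    have h1 := (mem_ball_zero_iff.1 hz).le
    have h2 : ‖(ρ : ℂ) * z‖ ≤ ρ := by
      rw [norm_mul, Complex.norm_real, Real.norm_of_nonneg hρ.1]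
      nlinarith [hρ.1]
    exact ⟨mem_ball_zero_iff.2 (h2.trans_lt hρ.2), h2⟩
  have hdρ : DifferentiableOn ℂ (fun z => h ((ρ : ℂ) * z)) uDisk :=
    hd.comp (differentiableOn_id.const_mul _) fun z hz => (hρm z hz).1
  have hsumρ : Summable fun k => ‖c k * (1 - (ρ : ℂ) ^ k)‖ ^ 2 := by
    refine Summable.of_nonneg_of_le (fun _ => by positivity) (fun k => ?_) (hsum.mul_left 4)
    have h1 : ‖(1 : ℂ) - (ρ : ℂ) ^ k‖ ≤ 2 := by
      refine (norm_sub_le _ _).trans ?_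
      rw [norm_one, norm_pow, Complex.norm_real, Real.norm_of_nonneg hρ.1]
      linarith [pow_le_one₀ (n := k) hρ.1 hρ.2.le]
    rw [norm_mul, mul_pow, mul_comm]
    gcongr
    nlinarith [norm_nonneg ((1 : ℂ) - (ρ : ℂ) ^ k)]
  have hdil : ∀ r ∈ Ico (0:ℝ) 1,
      circMean 2 (fun z => h (b z) - h ((ρ : ℂ) * b z)) r ≤ 8 * Real.pi * δ := fun r hr => by
    refine circMean_two_comp_le (h := fun z => h z - h ((ρ : ℂ) * z))
      (c := fun k => c k * (1 - (ρ : ℂ) ^ k)) hb hb1 hb0 (fun z hz => ?_) (hd.sub hdρ)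
      (fun N => (hsumρ.sum_le_tsum _ fun _ _ => by positivity).trans hρS) hr
    have := (hc z hz).sub (hc _ (hρm z hz).1)
    have heq : (fun k => c k * z ^ k - c k * ((ρ : ℂ) * z) ^ k)
        = fun k => c k * (1 - (ρ : ℂ) ^ k) * z ^ k := by
      ext k
      ring
    rwa [heq] at this
  obtain ⟨N, hN⟩ := exists_partial_sum_close hc hρ (ε := min 1 (Real.sqrt δ)) (by positivity)
  have hPe : ∀ z : ℂ, (∑ k ∈ Finset.range N, Polynomial.C (c k * (ρ : ℂ) ^ k) * X ^ k).eval z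
      = ∑ k ∈ Finset.range N, c k * ((ρ : ℂ) * z) ^ k := fun z => by
    rw [Polynomial.eval_finsetSum]
    exact Finset.sum_congr rfl fun k _ => by simp; ring
  have hclose : ∀ z ∈ uDisk, ‖h ((ρ : ℂ) * z) -
      (∑ k ∈ Finset.range N, Polynomial.C (c k * (ρ : ℂ) ^ k) * X ^ k).eval z‖
        ≤ min 1 (Real.sqrt δ) := fun z hz => by
    rw [hPe]
    exact hN N le_rfl _ (hρm z hz).2
  refine ⟨∑ k ∈ Finset.range N, Polynomial.C (c k * (ρ : ℂ) ^ k) * X ^ k, fun z hz => ?_,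
    fun r hr => ?_⟩
  · have h1 := (hclose z hz).trans (min_le_left _ _)
    have h2 := hK _ (hρm z hz).1
    have h3 := norm_sub_norm_le
      ((∑ k ∈ Finset.range N, Polynomial.C (c k * (ρ : ℂ) ^ k) * X ^ k).eval z) (h ((ρ : ℂ) * z))
    rw [norm_sub_rev] at h3
    linarith
  · set P := ∑ k ∈ Finset.range N, Polynomial.C (c k * (ρ : ℂ) ^ k) * X ^ k
    have hdP : DifferentiableOn ℂ (fun z => P.eval (b z)) uDisk :=
      P.differentiable.comp_differentiableOn hb
    have hdh : DifferentiableOn ℂ (fun z => h (b z)) uDisk := hd.comp hb hb1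
    have hdh2 : DifferentiableOn ℂ (fun z => h ((ρ : ℂ) * b z)) uDisk := hdρ.comp hb hb1
    have h1 := circMean_add_le zero_lt_two (hdh.fun_sub hdh2).continuousOn
      (hdh2.fun_sub hdP).continuousOn hr
    have h2 := circMean_le_of_bdd zero_lt_two (hdh2.fun_sub hdP).continuousOn
      (fun z hz => (hclose (b z) (hb1 z hz)).trans (min_le_right _ _)) hr
    have h3 := hdil r hr
    simp only [sub_add_sub_cancel, Real.rpow_two] at h1 h2
    rw [Real.sq_sqrt hδ0.le] at h2
    have h4 : 64 * Real.pi * δ = ε := by rw [hδ]; field_simp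
    have h5 : 0 < Real.pi * δ := by positivity
    norm_num at h1
    nlinarith

/-! ### Elements of the `H^p`-closure of `ℂ[F,G]` -/

lemma mem_hpClosure_congr {p : ℝ} (hp : 0 < p) {S : Set (ℂ → ℂ)} (hS : ∀ u ∈ S, MemHp p u)
    {f h : ℂ → ℂ} (hf : f ∈ hpClosure p S) (hfh : ∀ z ∈ uDisk, f z = h z) :
    h ∈ hpClosure p S := by
  obtain ⟨⟨h1, K, hK⟩, h2⟩ := (mem_hpClosure_iff hp hS).1 hf
  refine (mem_hpClosure_iff hp hS).2 ⟨⟨h1.congr fun z hz => (hfh z hz).symm, K, fun r hr => ?_⟩,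
    fun ε hε => ?_⟩
  · rw [← circMean_congr hfh hr]
    exact hK r hr
  · obtain ⟨u, hu, hle⟩ := h2 ε hε
    refine ⟨u, hu, fun r hr => ?_⟩
    rw [circMean_congr (h := fun z => f z - u z) (fun z hz => by rw [hfh z hz]) hr]
    exact hle r hr

lemma zero_mem_hpClosure {p : ℝ} (hp : 0 < p) {F G : ℂ → ℂ} (hF : MemHinf F)
    (hG : MemHinf G) : (fun _ => (0 : ℂ)) ∈ hpClosure p (algGen2 F G) := by
  refine (mem_hpClosure_iff hp fun u hu => (memHinf_of_mem_algGen2 hF hG hu).memHp hp).2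
    ⟨(MemHinf.const 0).memHp hp, fun ε hε => ⟨fun _ => 0, ⟨0, fun z => by simp⟩, fun r hr => ?_⟩⟩
  simp only [sub_zero, circMean_const, norm_zero, Real.zero_rpow hp.ne', mul_zero]
  exact hε.le

lemma add_mem_hpClosure {p : ℝ} (hp : 0 < p) {F G : ℂ → ℂ} (hF : MemHinf F)
    (hG : MemHinf G) {f h : ℂ → ℂ} (hf : f ∈ hpClosure p (algGen2 F G))
    (hh : h ∈ hpClosure p (algGen2 F G)) :
    (fun z => f z + h z) ∈ hpClosure p (algGen2 F G) := by
  have hS : ∀ u ∈ algGen2 F G, MemHp p u := fun u hu =>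
    (memHinf_of_mem_algGen2 hF hG hu).memHp hp
  obtain ⟨h1, h2⟩ := (mem_hpClosure_iff hp hS).1 hf
  obtain ⟨h3, h4⟩ := (mem_hpClosure_iff hp hS).1 hh
  refine (mem_hpClosure_iff hp hS).2 ⟨h1.add hp h3, fun ε hε => ?_⟩
  obtain ⟨u, hu, hle⟩ := h2 (ε / (2 * 2 ^ p)) (by positivity)
  obtain ⟨v, hv, hle'⟩ := h4 (ε / (2 * 2 ^ p)) (by positivity)
  refine ⟨_, add_mem_algGen2 hu hv, fun r hr => ?_⟩
  have h5 := circMean_add_le hp (h1.1.fun_sub (hS u hu).1).continuousOn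
    (h3.1.fun_sub (hS v hv).1).continuousOn hr
  have h6 : (fun z => f z - u z + (h z - v z)) = fun z => f z + h z - (u z + v z) := by
    ext z; ring
  rw [h6] at h5
  have h7 : (2:ℝ) ^ p * (ε / (2 * 2 ^ p)) = ε / 2 := by field_simp
  have h8 : (0:ℝ) < 2 ^ p := by positivity
  have h9 := mul_le_mul_of_nonneg_left (hle r hr) h8.le
  have h10 := mul_le_mul_of_nonneg_left (hle' r hr) h8.le
  linarith

lemma sum_mem_hpClosure {p : ℝ} (hp : 0 < p) {F G : ℂ → ℂ} (hF : MemHinf F)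
    (hG : MemHinf G) {ι : Type*} (s : Finset ι) {f : ι → ℂ → ℂ}
    (hf : ∀ i ∈ s, f i ∈ hpClosure p (algGen2 F G)) :
    (fun z => ∑ i ∈ s, f i z) ∈ hpClosure p (algGen2 F G) := by
  induction s using Finset.induction_on with
  | empty => simpa using zero_mem_hpClosure hp hF hG
  | insert i s hi ih =>
    simp only [Finset.sum_insert hi]
    exact add_mem_hpClosure hp hF hG (hf i (by simp)) (ih fun j hj => hf j (by simp [hj]))

/-- Polynomial approximation in `H²` transfers to `H^p` because the approximants are uniformly
bounded. -/
lemma comp_mul_pow_mem_hpClosure {p : ℝ} (hp : 0 < p) {b g : ℂ → ℂ}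
    (hb : DifferentiableOn ℂ b uDisk) (hb1 : ∀ z ∈ uDisk, b z ∈ uDisk) (hb0 : b 0 = 0)
    (hg : MemHinf g) {c : ℂ → ℂ} (hc : MemHinf c) (k : ℕ) :
    (fun z => c (b z) * g z ^ k) ∈ hpClosure p (algGen2 b g) := by
  have hbm : MemHinf b := ⟨hb, 1, fun z hz => (mem_ball_zero_iff.1 (hb1 z hz)).le⟩
  have hS : ∀ u ∈ algGen2 b g, MemHp p u := fun u hu =>
    (memHinf_of_mem_algGen2 hbm hg hu).memHp hp
  obtain ⟨hcd, K, hK⟩ := hc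
  have hcb : MemHinf fun z => c (b z) := ⟨hcd.comp hb hb1, K, fun z hz => hK _ (hb1 z hz)⟩
  obtain ⟨hgd, L, hL⟩ := hg.pow k
  have h0 : (0:ℂ) ∈ uDisk := by simp [uDisk]
  have hK0 : 0 ≤ K := (norm_nonneg _).trans (hK 0 h0)
  have hL0 : 0 ≤ L := (norm_nonneg _).trans (hL 0 h0)
  refine (mem_hpClosure_iff hp hS).2 ⟨(hcb.mul (hg.pow k)).memHp hp, fun ε hε => ?_⟩
  -- on bounded sets convergence in `H²` implies convergence in `H^p`; `δ` is the threshold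
  set δ : ℝ := (ε / (4 * Real.pi)) ^ (1 / p) with hδ
  have hδ0 : 0 < δ := by positivity
  have hδp : 2 * Real.pi * δ ^ p = ε / 2 := by
    rw [hδ, ← Real.rpow_mul (by positivity), one_div_mul_cancel hp.ne', Real.rpow_one]
    field_simp
    norm_num
  set A : ℝ := (L * (2 * K + 1)) ^ p / δ ^ 2 * (L ^ 2 + 1) with hA
  have hA0 : 0 ≤ A := by positivity
  obtain ⟨P, hP, hle⟩ := exists_poly_approx hb hb1 hb0 hcd hK (ε := ε / (2 * (A + 1)))
    (by positivity)
  refine ⟨fun z => P.eval (b z) * g z ^ k,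
    ⟨P.aeval (MvPolynomial.X 0) * MvPolynomial.X 1 ^ k, fun z => ?_⟩, fun r hr => ?_⟩
  · have key : ∀ (v : Fin 2 → ℂ) (Q : ℂ[X]),
        MvPolynomial.eval v (Q.aeval (MvPolynomial.X 0)) = Q.eval (v 0) := by
      intro v Q
      induction Q using Polynomial.induction_on' with
      | add Q R hQ hR => rw [map_add, map_add, hQ, hR, Polynomial.eval_add]
      | monomial m c => simp [Polynomial.aeval_monomial, MvPolynomial.algebraMap_eq]
    rw [map_mul, key]
    simp
  · have hPd : DifferentiableOn ℂ (fun z => P.eval (b z)) uDisk :=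
      P.differentiable.comp_differentiableOn hb
    have hdd := hcb.1.fun_sub hPd
    have heq : (fun z => c (b z) * g z ^ k - P.eval (b z) * g z ^ k)
        = fun z => g z ^ k * (c (b z) - P.eval (b z)) := by
      ext z; ring
    rw [heq]
    have hbd : ∀ z ∈ uDisk, ‖g z ^ k * (c (b z) - P.eval (b z))‖ ≤ L * (2 * K + 1) := by
      intro z hz
      refine norm_mul_le_of_le (hL z hz) ((norm_sub_le _ _).trans ?_)
      linarith [hK _ (hb1 z hz), hP _ (hb1 z hz)]
    have h1 := circMean_le_of_sq hp (hgd.fun_mul hdd).continuousOn hbd hδ0 hr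
    have h2 := circMean_mul_le zero_lt_two hdd.continuousOn hgd.continuousOn hL hr
    rw [Real.rpow_two] at h2
    have h3 := hle r hr
    have h4 := circMean_nonneg 2 (fun z => c (b z) - P.eval (b z)) r
    calc _ ≤ _ := h1
      _ ≤ ε / 2 + (L * (2 * K + 1)) ^ p / δ ^ 2
          * ((L ^ 2 + 1) * circMean 2 (fun z => c (b z) - P.eval (b z)) r) := by
        rw [hδp]
        gcongr
        linarith
      _ = ε / 2 + A * circMean 2 (fun z => c (b z) - P.eval (b z)) r := by rw [hA]; ring
      _ ≤ ε / 2 + (A + 1) * (ε / (2 * (A + 1))) := by gcongr; linarith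
      _ = ε := by field_simp; ring

/-! ### The fibers of a finite Blaschke product -/

/-- The numerator of the Blaschke product. -/
def blNum {n : ℕ} (a : Fin n → ℂ) : ℂ[X] := ∏ j, (Polynomial.C (a j) - Polynomial.X)

/-- The denominator of the Blaschke product. -/
def blDen {n : ℕ} (a : Fin n → ℂ) : ℂ[X] :=
  ∏ j, (1 - Polynomial.C ((starRingEnd ℂ) (a j)) * Polynomial.X)

/-- The polynomial whose roots are the solutions of `B = w`. -/
def blPoly {n : ℕ} (a : Fin n → ℂ) (w : ℂ) : ℂ[X] := blNum a - Polynomial.C w * blDen a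

lemma fiberMS_eq {n : ℕ} (a : Fin n → ℂ) (z : ℂ) :
    fiberMS a z = (blPoly a (blaschke a z)).roots := rfl

lemma blaschke_eq_div {n : ℕ} (a : Fin n → ℂ) (z : ℂ) :
    blaschke a z = (blNum a).eval z / (blDen a).eval z := by
  simp [blaschke, blNum, blDen, Polynomial.eval_prod, Finset.prod_div_distrib]

lemma one_sub_conj_mul_ne_zero {α z : ℂ} (hα : α ∈ uDisk) (hz : ‖z‖ ≤ 1) :
    1 - (starRingEnd ℂ) α * z ≠ 0 := by
  intro h
  have h1 : ‖(starRingEnd ℂ) α * z‖ = 1 := by rw [← sub_eq_zero.1 h, norm_one]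
  rw [norm_mul, RCLike.norm_conj] at h1
  have h2 : ‖α‖ < 1 := mem_ball_zero_iff.1 hα
  nlinarith [norm_nonneg α, norm_nonneg z]

lemma blDen_eval_ne_zero {n : ℕ} {a : Fin n → ℂ} (ha : ∀ j, a j ∈ uDisk) {z : ℂ}
    (hz : z ∈ uDisk) : (blDen a).eval z ≠ 0 := by
  rw [blDen, Polynomial.eval_prod]
  refine Finset.prod_ne_zero_iff.2 fun j _ => ?_
  simpa using one_sub_conj_mul_ne_zero (ha j) (mem_ball_zero_iff.1 hz).le

/-- The basic identity behind the mapping properties of Blaschke factors. -/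
lemma sq_norm_one_sub_conj_mul (α z : ℂ) :
    ‖1 - (starRingEnd ℂ) α * z‖ ^ 2 - ‖α - z‖ ^ 2 = (1 - ‖α‖ ^ 2) * (1 - ‖z‖ ^ 2) := by
  simp only [Complex.sq_norm, Complex.normSq_apply, Complex.sub_re, Complex.sub_im,
    Complex.mul_re, Complex.mul_im, Complex.conj_re, Complex.conj_im, Complex.one_re,
    Complex.one_im]
  ring

lemma blaschke_mem {n : ℕ} {a : Fin n → ℂ} (ha : ∀ j, a j ∈ uDisk) {i₀ : Fin n}
    (hi₀ : a i₀ = 0) {z : ℂ} (hz : z ∈ uDisk) : blaschke a z ∈ uDisk := by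
  have hz1 : ‖z‖ < 1 := mem_ball_zero_iff.1 hz
  rw [uDisk, mem_ball_zero_iff, blaschke, norm_prod,
    ← Finset.mul_prod_erase _ _ (Finset.mem_univ i₀)]
  have h1 : ∏ j ∈ Finset.univ.erase i₀, ‖(a j - z) / (1 - (starRingEnd ℂ) (a j) * z)‖ ≤ 1 := by
    refine Finset.prod_le_one (fun _ _ => norm_nonneg _) fun j _ => ?_
    rw [norm_div, div_le_one (norm_pos_iff.2 (one_sub_conj_mul_ne_zero (ha j) hz1.le))]
    refine le_of_sq_le_sq ?_ (norm_nonneg _)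
    have h2 := sq_norm_one_sub_conj_mul (a j) z
    have h3 : ‖a j‖ < 1 := mem_ball_zero_iff.1 (ha j)
    have h4 : 0 ≤ (1 - ‖a j‖ ^ 2) * (1 - ‖z‖ ^ 2) :=
      mul_nonneg (by nlinarith [norm_nonneg (a j)]) (by nlinarith [norm_nonneg z])
    linarith
  have h2 : ‖(a i₀ - z) / (1 - (starRingEnd ℂ) (a i₀) * z)‖ = ‖z‖ := by simp [hi₀]
  rw [h2]
  nlinarith [norm_nonneg z]

lemma blaschke_zero {n : ℕ} {a : Fin n → ℂ} {i₀ : Fin n} (hi₀ : a i₀ = 0) :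
    blaschke a 0 = 0 :=
  Finset.prod_eq_zero (Finset.mem_univ i₀) (by simp [hi₀])

lemma differentiableOn_blaschke {n : ℕ} {a : Fin n → ℂ} (ha : ∀ j, a j ∈ uDisk) :
    DifferentiableOn ℂ (blaschke a) uDisk := by
  have h : blaschke a = fun z => (blNum a).eval z / (blDen a).eval z :=
    funext fun z => blaschke_eq_div a z
  rw [h]
  exact (blNum a).differentiable.differentiableOn.div (blDen a).differentiable.differentiableOn
    fun z hz => blDen_eval_ne_zero ha hz

lemma natDegree_blNum {n : ℕ} (a : Fin n → ℂ) : (blNum a).natDegree = n := by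
  have h : blNum a = ∏ j, -(Polynomial.X - Polynomial.C (a j)) := by
    simp [blNum]
  rw [h, Polynomial.natDegree_prod _ _ fun j _ => neg_ne_zero.2 (Polynomial.X_sub_C_ne_zero _)]
  rw [Finset.sum_congr rfl fun j _ => (Polynomial.natDegree_neg _).trans
    (Polynomial.natDegree_X_sub_C (a j))]
  simp

lemma natDegree_blDen_lt {n : ℕ} {a : Fin n → ℂ} {i₀ : Fin n} (hi₀ : a i₀ = 0) :
    (blDen a).natDegree < n := by
  refine (Polynomial.natDegree_prod_le _ _).trans_lt ?_
  have h : ∑ j : Fin n, (1 - Polynomial.C ((starRingEnd ℂ) (a j)) * Polynomial.X).natDegree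
      < ∑ _j : Fin n, 1 := by
    refine Finset.sum_lt_sum (fun j _ => ?_) ⟨i₀, Finset.mem_univ _, by simp [hi₀]⟩
    compute_degree
  simpa using h

lemma natDegree_blPoly {n : ℕ} {a : Fin n → ℂ} {i₀ : Fin n} (hi₀ : a i₀ = 0) (w : ℂ) :
    (blPoly a w).natDegree = n := by
  rw [blPoly, Polynomial.natDegree_sub_eq_left_of_natDegree_lt, natDegree_blNum]
  rw [natDegree_blNum]
  exact (Polynomial.natDegree_C_mul_le _ _).trans_lt (natDegree_blDen_lt hi₀)

lemma blPoly_ne_zero {n : ℕ} {a : Fin n → ℂ} {i₀ : Fin n} (hi₀ : a i₀ = 0) (w : ℂ) :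
    blPoly a w ≠ 0 := by
  intro h
  have h1 := natDegree_blPoly hi₀ w
  rw [h, Polynomial.natDegree_zero] at h1
  exact absurd i₀.isLt (by omega)

lemma card_roots_blPoly {n : ℕ} {a : Fin n → ℂ} {i₀ : Fin n} (hi₀ : a i₀ = 0) (w : ℂ) :
    Multiset.card (blPoly a w).roots = n := by
  rw [← (IsAlgClosed.splits (blPoly a w)).natDegree_eq_card_roots, natDegree_blPoly hi₀]

/-- All the solutions of `B = w` lie in the disk when `w` does, because `|B| ≥ 1` outside. -/
lemma mem_uDisk_of_mem_roots {n : ℕ} {a : Fin n → ℂ} (ha : ∀ j, a j ∈ uDisk) {w ζ : ℂ}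
    (hw : w ∈ uDisk) (hζ : ζ ∈ (blPoly a w).roots) : ζ ∈ uDisk := by
  have h1 : (blNum a).eval ζ = w * (blDen a).eval ζ := by
    have := (Polynomial.mem_roots'.1 hζ).2
    simpa [blPoly, sub_eq_zero] using this
  by_contra hout
  have hζ1 : 1 ≤ ‖ζ‖ := by simpa [uDisk] using hout
  have hle : ‖(blDen a).eval ζ‖ ≤ ‖(blNum a).eval ζ‖ := by
    simp only [blDen, blNum, Polynomial.eval_prod, norm_prod]
    refine Finset.prod_le_prod (fun _ _ => norm_nonneg _) fun j _ => ?_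
    simp only [Polynomial.eval_sub, Polynomial.eval_one, Polynomial.eval_mul, Polynomial.eval_C,
      Polynomial.eval_X]
    refine le_of_sq_le_sq ?_ (norm_nonneg _)
    have h2 := sq_norm_one_sub_conj_mul (a j) ζ
    have h3 : ‖a j‖ < 1 := mem_ball_zero_iff.1 (ha j)
    have h4 : (1 - ‖a j‖ ^ 2) * (1 - ‖ζ‖ ^ 2) ≤ 0 :=
      mul_nonpos_of_nonneg_of_nonpos (by nlinarith [norm_nonneg (a j)]) (by nlinarith)
    linarith
  have hw1 : ‖w‖ < 1 := mem_ball_zero_iff.1 hw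
  have hD : ‖(blDen a).eval ζ‖ = 0 := by
    rw [h1, norm_mul] at hle
    nlinarith [norm_nonneg ((blDen a).eval ζ)]
  have hN : (blNum a).eval ζ = 0 := by
    rw [h1, norm_eq_zero.1 hD, mul_zero]
  rw [blNum, Polynomial.eval_prod, Finset.prod_eq_zero_iff] at hN
  obtain ⟨j, -, hj⟩ := hN
  have : a j = ζ := by simpa [sub_eq_zero] using hj
  exact hout (this ▸ ha j)

lemma mem_roots_blPoly_iff {n : ℕ} {a : Fin n → ℂ} (ha : ∀ j, a j ∈ uDisk) {i₀ : Fin n}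
    (hi₀ : a i₀ = 0) {w ζ : ℂ} (hζ : ζ ∈ uDisk) :
    ζ ∈ (blPoly a w).roots ↔ blaschke a ζ = w := by
  rw [Polynomial.mem_roots (blPoly_ne_zero hi₀ w), blaschke_eq_div,
    div_eq_iff (blDen_eval_ne_zero ha hζ)]
  simp [blPoly, sub_eq_zero]

/-- A finite set containing the critical values of the Blaschke product in the disk: the values
at all zeros of the numerator of the derivative (up to sign), including the zeros outside the disk. -/
def critVals {n : ℕ} (a : Fin n → ℂ) : Finset ℂ :=
  (Polynomial.wronskian (blNum a) (blDen a)).roots.toFinset.image (blaschke a)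

/-- The points lying over the critical values. -/
def excPts {n : ℕ} (a : Fin n → ℂ) : Finset ℂ :=
  (critVals a).biUnion fun v => (blPoly a v).roots.toFinset

lemma blaschke_notMem_critVals {n : ℕ} {a : Fin n → ℂ} (ha : ∀ j, a j ∈ uDisk) {i₀ : Fin n}
    (hi₀ : a i₀ = 0) {z : ℂ} (hz : z ∈ uDisk) (hze : z ∉ excPts a) :
    blaschke a z ∉ critVals a := fun h =>
  hze (Finset.mem_biUnion.2 ⟨_, h, Multiset.mem_toFinset.2
    ((mem_roots_blPoly_iff ha hi₀ hz).2 rfl)⟩)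

lemma wronskian_ne_zero {n : ℕ} {a : Fin n → ℂ} (ha : ∀ j, a j ∈ uDisk) (i₀ : Fin n) :
    Polynomial.wronskian (blNum a) (blDen a) ≠ 0 := by
  have hcop : IsCoprime (blNum a) (blDen a) := by
    refine (Polynomial.isCoprime_iff_aeval_ne_zero_of_isAlgClosed ℂ ℂ _ _).2 fun z => ?_
    by_cases hN : (blNum a).eval z = 0
    · right
      rw [blNum, Polynomial.eval_prod, Finset.prod_eq_zero_iff] at hN
      obtain ⟨j, -, hj⟩ := hN
      have : a j = z := by simpa [sub_eq_zero] using hj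
      simpa using blDen_eval_ne_zero ha (this ▸ ha j)
    · left
      simpa using hN
  intro h
  have h1 := Polynomial.derivative_eq_zero.1 (hcop.wronskian_eq_zero_iff.1 h).1
  rw [natDegree_blNum] at h1
  exact absurd i₀.isLt (by omega)

lemma eval_wronskian_ne_zero {n : ℕ} {a : Fin n → ℂ} (ha : ∀ j, a j ∈ uDisk) (i₀ : Fin n)
    {ζ : ℂ} (hζ : blaschke a ζ ∉ critVals a) :
    (Polynomial.wronskian (blNum a) (blDen a)).eval ζ ≠ 0 := fun h =>
  hζ (Finset.mem_image.2 ⟨ζ, Multiset.mem_toFinset.2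
    ((Polynomial.mem_roots (wronskian_ne_zero ha i₀)).2 h), rfl⟩)

lemma nodup_roots_blPoly {n : ℕ} {a : Fin n → ℂ} (ha : ∀ j, a j ∈ uDisk) {i₀ : Fin n}
    (hi₀ : a i₀ = 0) {w : ℂ} (hw : w ∈ uDisk) (hwc : w ∉ critVals a) :
    (blPoly a w).roots.Nodup := by
  rw [Multiset.nodup_iff_count_le_one]
  intro ζ
  rw [Polynomial.count_roots]
  by_contra! hlt
  obtain ⟨h1, h2⟩ := (Polynomial.one_lt_rootMultiplicity_iff_isRoot (blPoly_ne_zero hi₀ w)).1 hlt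
  have hmem : ζ ∈ (blPoly a w).roots := (Polynomial.mem_roots (blPoly_ne_zero hi₀ w)).2 h1
  have hB := (mem_roots_blPoly_iff ha hi₀ (mem_uDisk_of_mem_roots ha hw hmem)).1 hmem
  refine eval_wronskian_ne_zero ha i₀ (ζ := ζ) (by rwa [hB]) ?_
  simp only [blPoly, Polynomial.IsRoot, Polynomial.derivative_sub, Polynomial.eval_sub,
    Polynomial.eval_mul, Polynomial.eval_C, Polynomial.derivative_C_mul, sub_eq_zero] at h1 h2
  simp only [Polynomial.wronskian, Polynomial.eval_sub, Polynomial.eval_mul, h1, h2]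
  ring

lemma deriv_blaschke_ne_zero {n : ℕ} {a : Fin n → ℂ} (ha : ∀ j, a j ∈ uDisk) (i₀ : Fin n)
    {ζ : ℂ} (hζ : ζ ∈ uDisk) (hc : blaschke a ζ ∉ critVals a) : deriv (blaschke a) ζ ≠ 0 := by
  have h : blaschke a = fun z => (blNum a).eval z / (blDen a).eval z :=
    funext fun z => blaschke_eq_div a z
  have hD := blDen_eval_ne_zero ha hζ
  have hd := ((blNum a).hasDerivAt ζ).fun_div ((blDen a).hasDerivAt ζ) hD
  rw [h, hd.deriv]
  refine div_ne_zero ?_ (pow_ne_zero 2 hD)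
  have h1 := eval_wronskian_ne_zero ha i₀ hc
  simp only [Polynomial.wronskian, Polynomial.eval_sub, Polynomial.eval_mul] at h1
  intro h2
  exact h1 (by linear_combination -h2)

/-- Over a neighbourhood of a regular value the fibers of `B` are described by `n` disjoint
holomorphic branches of `B⁻¹`. -/
lemma exists_branches {n : ℕ} {a : Fin n → ℂ} (ha : ∀ j, a j ∈ uDisk) {i₀ : Fin n}
    (hi₀ : a i₀ = 0) {w₀ : ℂ} (hw₀ : w₀ ∈ uDisk) (hc : w₀ ∉ critVals a) :
    ∃ ψ : Fin n → ℂ → ℂ, (∀ i, AnalyticAt ℂ (ψ i) w₀) ∧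
      ∀ᶠ w in 𝓝 w₀, w ∈ uDisk ∧ (∀ i, ψ i w ∈ uDisk) ∧ (∀ i, blaschke a (ψ i w) = w) ∧
        Function.Injective (fun i => ψ i w) ∧
        (blPoly a w).roots = Finset.univ.val.map fun i => ψ i w := by
  have hnd := nodup_roots_blPoly ha hi₀ hw₀ hc
  have hcard : (blPoly a w₀).roots.toFinset.card = n := by
    rw [Multiset.toFinset_card_of_nodup hnd, card_roots_blPoly hi₀]
  let e := (blPoly a w₀).roots.toFinset.equivFinOfCardEq hcard
  let ζ : Fin n → ℂ := fun i => (e.symm i : ℂ)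
  have hζinj : Function.Injective ζ := Subtype.val_injective.comp e.symm.injective
  have hζmem : ∀ i, ζ i ∈ (blPoly a w₀).roots := fun i => Multiset.mem_toFinset.1 (e.symm i).2
  have hζd : ∀ i, ζ i ∈ uDisk := fun i => mem_uDisk_of_mem_roots ha hw₀ (hζmem i)
  have hζB : ∀ i, blaschke a (ζ i) = w₀ := fun i =>
    (mem_roots_blPoly_iff ha hi₀ (hζd i)).1 (hζmem i)
  have hloc : ∀ i, ∃ φ : ℂ → ℂ, AnalyticAt ℂ φ w₀ ∧ φ w₀ = ζ i ∧
      ∀ᶠ w in 𝓝 w₀, blaschke a (φ w) = w := by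
    intro i
    have han : AnalyticAt ℂ (blaschke a) (ζ i) :=
      (differentiableOn_blaschke ha).analyticAt (isOpen_ball.mem_nhds (hζd i))
    have hne : deriv (blaschke a) (ζ i) ≠ 0 :=
      deriv_blaschke_ne_zero ha i₀ (hζd i) (by rwa [hζB])
    refine ⟨han.hasStrictDerivAt.localInverse _ _ _ hne, ?_, ?_, ?_⟩
    · simpa only [hζB] using han.analyticAt_localInverse hne
    · have : (han.hasStrictDerivAt.localInverse _ _ _ hne) (blaschke a (ζ i)) = ζ i :=
        HasStrictFDerivAt.localInverse_apply_image ..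
      rwa [hζB] at this
    · have := HasStrictDerivAt.eventually_right_inverse han.hasStrictDerivAt hne
      rwa [hζB] at this
  choose ψ hψ hψ0 hψB using hloc
  refine ⟨ψ, hψ, ?_⟩
  have h1 : ∀ᶠ w in 𝓝 w₀, ∀ i, ψ i w ∈ uDisk := eventually_all.2 fun i =>
    (hψ i).continuousAt.eventually_mem (isOpen_ball.mem_nhds (by rw [hψ0]; exact hζd i))
  have h2 : ∀ᶠ w in 𝓝 w₀, ∀ i j, i ≠ j → ψ i w ≠ ψ j w := by
    refine eventually_all.2 fun i => eventually_all.2 fun j => ?_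
    by_cases hij : i = j
    · simp [hij]
    · have : ψ i w₀ ≠ ψ j w₀ := by
        rw [hψ0, hψ0]
        exact fun h => hij (hζinj h)
      filter_upwards [(hψ i).continuousAt.ne_iff_eventually_ne (hψ j).continuousAt |>.1 this]
        with w hw _ using hw
  filter_upwards [isOpen_ball.mem_nhds hw₀, h1, h2, eventually_all.2 hψB] with w hw hm hne hB
  have hinj : Function.Injective fun i => ψ i w := fun i j hij => by
    by_contra hcon
    exact hne i j hcon hij
  refine ⟨hw, hm, hB, hinj, (Multiset.eq_of_le_of_card_le ?_ ?_).symm⟩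
  · rw [Multiset.le_iff_subset (Finset.univ.nodup.map hinj)]
    intro x hx
    obtain ⟨i, -, rfl⟩ := Multiset.mem_map.1 hx
    exact (mem_roots_blPoly_iff ha hi₀ (hm i)).2 (hB i)
  · rw [card_roots_blPoly hi₀]
    simp

/-! ### Vanishing of `Γ(g)` forces trivial invariant subspaces -/

lemma calD_eq_prod {n : ℕ} {a : Fin n → ℂ} (f : ℂ → ℂ) {w : ℂ} {x : Fin n → ℂ}
    (hx : (blPoly a w).roots = Finset.univ.val.map x) (hB : ∀ i, blaschke a (x i) = w)
    (i : Fin n) : calD a f (x i) = ∏ j ∈ Finset.univ.erase i, (f (x i) - f (x j)) := by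
  rw [calD, fiberMS_eq, hB i, hx, ← Multiset.map_erase_of_mem _ _ (Finset.mem_univ_val i),
    Multiset.map_map, ← Finset.erase_val]
  rfl

lemma exists_mem_uDisk_notMem (s : Finset ℂ) : ∃ z ∈ uDisk, z ∉ s := by
  have h : (uDisk : Set ℂ).Infinite :=
    infinite_of_mem_nhds (0 : ℂ) (Metric.ball_mem_nhds 0 one_pos)
  exact h.exists_notMem_finset s

lemma eq_on_algGen2 {F G u : ℂ → ℂ} (hu : u ∈ algGen2 F G) {x y : ℂ} (hF : F x = F y)
    (hG : G x = G y) : u x = u y := by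
  obtain ⟨P, hP⟩ := hu
  rw [hP, hP]
  congr 2
  funext i
  fin_cases i <;> simp [hF, hG]

/-- If `Γ(g) = 0`, then over a small disk of regular values `g` takes the same values along two
different branches of `B⁻¹`, hence so does every element of the closed algebra; applied to both
`f` and `z f` this forces `f = 0`. -/
lemma forward {n : ℕ} {a : Fin n → ℂ} (ha : ∀ j, a j ∈ uDisk) {i₀ : Fin n} (hi₀ : a i₀ = 0)
    {g Γg : ℂ → ℂ} (hg : MemHinf g) (hΓg : IsGamma a g Γg) {p : ℝ} (hp : 0 < p)
    (h0 : ∀ z ∈ uDisk, Γg z = 0) {M : Set (ℂ → ℂ)} (hM : IsZInvSubspace p M)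
    (hMs : M ⊆ hpClosure p (algGen2 (blaschke a) g)) {f : ℂ → ℂ} (hf : f ∈ M) :
    ∀ z ∈ uDisk, f z = 0 := by
  obtain ⟨z₀, hz₀, hz₀e⟩ := exists_mem_uDisk_notMem (excPts a)
  have hbH : MemHinf (blaschke a) := ⟨differentiableOn_blaschke ha, 1, fun z hz =>
    (mem_ball_zero_iff.1 (blaschke_mem ha hi₀ hz)).le⟩
  have hSp : ∀ u ∈ algGen2 (blaschke a) g, MemHp p u := fun u hu =>
    (memHinf_of_mem_algGen2 hbH hg hu).memHp hp
  have hw₀ := blaschke_mem ha hi₀ hz₀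
  obtain ⟨ψ, hψa, hψ⟩ := exists_branches ha hi₀ hw₀ (blaschke_notMem_critVals ha hi₀ hz₀ hz₀e)
  set w₀ := blaschke a z₀ with hw₀d
  have hψ₀ := hψ.self_of_nhds
  obtain ⟨i, hi⟩ : ∃ i, ψ i w₀ = z₀ := by
    have h1 : z₀ ∈ (blPoly a w₀).roots := (mem_roots_blPoly_iff ha hi₀ hz₀).2 rfl
    rw [hψ₀.2.2.2.2] at h1
    obtain ⟨i, -, hi⟩ := Multiset.mem_map.1 h1
    exact ⟨i, hi⟩
  have hgan : ∀ j, AnalyticAt ℂ (fun w => g (ψ j w)) w₀ := fun j =>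
    (hg.1.analyticAt (Metric.isOpen_ball.mem_nhds (hψ₀.2.1 j))).comp (hψa j)
  obtain ⟨j, hji, hj⟩ : ∃ j, j ≠ i ∧ ∀ᶠ w in 𝓝 w₀, g (ψ i w) - g (ψ j w) = 0 := by
    by_contra hcon
    have h1 : ∀ j, j ≠ i → ∀ᶠ w in 𝓝[≠] w₀, g (ψ i w) - g (ψ j w) ≠ 0 := fun j hji =>
      ((hgan i).sub (hgan j)).eventually_eq_zero_or_eventually_ne_zero.resolve_left
        fun h => hcon ⟨j, hji, h⟩
    have h2 : ∀ᶠ w in 𝓝[≠] w₀, ∀ j, j ≠ i → g (ψ i w) - g (ψ j w) ≠ 0 := by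
      rw [Filter.eventually_all]
      intro j
      by_cases hji : j = i
      · simp [hji]
      · filter_upwards [h1 j hji] with w hw _ using hw
    obtain ⟨w, hw1, hw2⟩ := (h2.and (hψ.filter_mono nhdsWithin_le_nhds)).exists
    have h3 := calD_eq_prod g hw2.2.2.2.2 hw2.2.2.1 i
    rw [← hΓg.2 _ (hw2.2.1 i), h0 _ (hw2.2.1 i), zero_mul] at h3
    obtain ⟨j, hj, hj0⟩ := Finset.prod_eq_zero_iff.1 h3.symm
    exact hw1 j (Finset.ne_of_mem_erase hj) hj0
  have hfz : ∀ᶠ w in 𝓝 w₀, f (ψ i w) = 0 := by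
    filter_upwards [hj, hψ] with w hw hw2
    obtain ⟨-, hwm, hwB, hwi, -⟩ := hw2
    have key : ∀ h ∈ M, h (ψ i w) = h (ψ j w) := fun h hh =>
      eq_of_mem_hpClosure hp hSp (hMs hh) (hwm i) (hwm j) fun u hu =>
        eq_on_algGen2 hu ((hwB i).trans (hwB j).symm) (sub_eq_zero.1 hw)
    have k1 := key f hf
    have k2 : ψ i w * f (ψ i w) = ψ j w * f (ψ j w) := key _ (hM.2.2.2.2.1 f hf)
    have hne : ψ i w - ψ j w ≠ 0 := sub_ne_zero.2 fun h => hji (hwi h).symm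
    refine (mul_eq_zero.1 ?_).resolve_left hne
    rw [sub_mul, k2, k1, sub_self]
  have hfd : AnalyticOnNhd ℂ f uDisk := (hM.1 f hf).1.analyticOnNhd Metric.isOpen_ball
  have htend : Tendsto (ψ i) (𝓝[≠] w₀) (𝓝[≠] z₀) := by
    refine tendsto_nhdsWithin_iff.2 ⟨?_, ?_⟩
    · have := (hψa i).continuousAt.tendsto
      rw [hi] at this
      exact this.mono_left nhdsWithin_le_nhds
    · filter_upwards [self_mem_nhdsWithin, hψ.filter_mono nhdsWithin_le_nhds] with w hw hw2 h
      refine hw (?_ : w = w₀)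
      rw [← hw2.2.2.1 i, Set.mem_singleton_iff.1 h]
  have hfreq : ∃ᶠ z in 𝓝[≠] z₀, f z = 0 :=
    htend.frequently (hfz.filter_mono nhdsWithin_le_nhds).frequently
  exact hfd.eqOn_zero_of_preconnected_of_frequently_eq_zero
    (convex_ball (0 : ℂ) 1).isPreconnected hz₀ hfreq

/-! ### Symmetric expressions in the fibers -/

/-- The Lagrange-type polynomial `∑_{ζ ∈ s} f(ζ) ∏_{ξ ∈ s ∖ {ζ}} (X - g(ξ))`, for a multiset
`s`. -/
def msPoly (f g : ℂ → ℂ) (s : Multiset ℂ) : ℂ[X] :=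
  (s.map fun ζ => Polynomial.C (f ζ) *
    ((s.erase ζ).map fun ξ => Polynomial.X - Polynomial.C (g ξ)).prod).sum

/-- The same polynomial with the values of `f` and `g` at the points of the multiset as
independent variables. -/
def lagPoly {n : ℕ} (x y : Fin n → ℂ) : ℂ[X] :=
  ∑ i, Polynomial.C (x i) * ∏ j ∈ Finset.univ.erase i, (Polynomial.X - Polynomial.C (y j))

lemma msPoly_map {n : ℕ} (f g : ℂ → ℂ) (x : Fin n → ℂ) :
    msPoly f g (Finset.univ.val.map x) = lagPoly (fun i => f (x i)) fun i => g (x i) := by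
  rw [msPoly, Multiset.map_map, lagPoly]
  refine congrArg Multiset.sum (Multiset.map_congr rfl fun i hi => ?_)
  simp only [Function.comp]
  rw [← Multiset.map_erase_of_mem _ _ hi, Multiset.map_map, ← Finset.erase_val]
  rfl

lemma natDegree_lagPoly_lt {n : ℕ} (i₀ : Fin n) (x y : Fin n → ℂ) :
    (lagPoly x y).natDegree < n := by
  have hn : 0 < n := Fin.pos i₀
  refine Nat.lt_of_le_pred hn (Polynomial.natDegree_sum_le_of_forall_le _ _ fun i _ => ?_)
  refine (Polynomial.natDegree_C_mul_le _ _).trans ?_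
  refine (Polynomial.natDegree_prod_le _ _).trans ?_
  rw [Finset.sum_congr rfl fun j _ => Polynomial.natDegree_X_sub_C (y j)]
  simp

lemma eval_lagPoly {n : ℕ} (x y : Fin n → ℂ) (i : Fin n) :
    (lagPoly x y).eval (y i) = x i * ∏ j ∈ Finset.univ.erase i, (y i - y j) := by
  rw [lagPoly, Polynomial.eval_finsetSum, Finset.sum_eq_single i]
  · simp [Polynomial.eval_prod]
  · intro k _ hk
    rw [Polynomial.eval_mul, Polynomial.eval_prod,
      Finset.prod_eq_zero (Finset.mem_erase.2 ⟨hk.symm, Finset.mem_univ i⟩) (by simp), mul_zero]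
  · intro h
    exact absurd (Finset.mem_univ i) h

lemma differentiable_coeff_mul {E : Type*} [NormedAddCommGroup E] [NormedSpace ℂ E]
    {P Q : E → ℂ[X]} (hP : ∀ k, Differentiable ℂ fun e => (P e).coeff k)
    (hQ : ∀ k, Differentiable ℂ fun e => (Q e).coeff k) (k : ℕ) :
    Differentiable ℂ fun e => (P e * Q e).coeff k := by
  simp only [Polynomial.coeff_mul]
  exact Differentiable.fun_sum fun i _ => (hP _).fun_mul (hQ _)

lemma differentiable_coeff_prod {E ι : Type*} [NormedAddCommGroup E] [NormedSpace ℂ E]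
    {P : ι → E → ℂ[X]} (s : Finset ι) (hP : ∀ i k, Differentiable ℂ fun e => (P i e).coeff k)
    (k : ℕ) : Differentiable ℂ fun e => (∏ i ∈ s, P i e).coeff k := by
  induction s using Finset.induction_on generalizing k with
  | empty => simp
  | insert i s hi ih =>
    simp only [Finset.prod_insert hi]
    exact differentiable_coeff_mul (hP i) ih k

lemma differentiable_coeff_lagPoly {n : ℕ} (k : ℕ) :
    Differentiable ℂ fun e : (Fin n → ℂ) × (Fin n → ℂ) => (lagPoly e.1 e.2).coeff k := by
  simp only [lagPoly, Polynomial.finsetSum_coeff]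
  refine Differentiable.fun_sum fun i _ => differentiable_coeff_mul (fun k => ?_)
    (differentiable_coeff_prod _ fun j k => ?_) k
  · simp only [Polynomial.coeff_C]
    split_ifs <;> fun_prop
  · simp only [Polynomial.coeff_sub, Polynomial.coeff_C]
    split_ifs <;> fun_prop

lemma differentiableAt_coeff_lagPoly {n : ℕ} {x y : ℂ → Fin n → ℂ} {w : ℂ}
    (hx : DifferentiableAt ℂ x w) (hy : DifferentiableAt ℂ y w) (k : ℕ) :
    DifferentiableAt ℂ (fun w => (lagPoly (x w) (y w)).coeff k) w := by
  have key : ∀ F : (Fin n → ℂ) × (Fin n → ℂ) → ℂ, Differentiable ℂ F →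
      DifferentiableAt ℂ (fun w => F (x w, y w)) w := fun F hF =>
    (hF (x w, y w)).fun_comp' w (hx.prodMk hy)
  exact key _ (differentiable_coeff_lagPoly k)

lemma exists_bound_coeff_lagPoly (n : ℕ) (C D : ℝ) (k : ℕ) : ∃ K : ℝ, ∀ x y : Fin n → ℂ,
    (∀ i, ‖x i‖ ≤ C) → (∀ i, ‖y i‖ ≤ D) → ‖(lagPoly x y).coeff k‖ ≤ K := by
  have hcpt : IsCompact ((Set.univ.pi fun _ : Fin n => closedBall (0 : ℂ) C) ×ˢ
      (Set.univ.pi fun _ : Fin n => closedBall (0 : ℂ) D)) :=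
    (isCompact_univ_pi fun _ => isCompact_closedBall _ _).prod
      (isCompact_univ_pi fun _ => isCompact_closedBall _ _)
  obtain ⟨K, hK⟩ := hcpt.exists_bound_of_continuousOn
    (differentiable_coeff_lagPoly (n := n) k).continuous.continuousOn
  exact ⟨K, fun x y hx hy => hK (x, y) ⟨fun i _ => mem_closedBall_zero_iff.2 (hx i),
    fun i _ => mem_closedBall_zero_iff.2 (hy i)⟩⟩

/-- Removal of finitely many singularities. -/
lemma exists_extension (S : Finset ℂ) : ∀ {c : ℂ → ℂ} {C : ℝ},
    DifferentiableOn ℂ c (uDisk \ S) → (∀ z ∈ uDisk \ S, ‖c z‖ ≤ C) →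
    ∃ c' : ℂ → ℂ, DifferentiableOn ℂ c' uDisk ∧ ∀ z ∈ uDisk \ S, c' z = c z := by
  induction S using Finset.induction_on with
  | empty =>
    intro c C hc _
    exact ⟨c, by simpa using hc, fun _ _ => rfl⟩
  | insert s S hs ih =>
    intro c C hc hC
    have hset : uDisk \ (↑(insert s S) : Set ℂ) = (uDisk \ (S : Set ℂ)) \ {s} := by
      ext z
      simp only [Finset.coe_insert, Set.mem_sdiff, Set.mem_insert_iff, Set.mem_singleton_iff]
      tauto
    rw [hset] at hc hC ⊢
    by_cases hsU : s ∈ uDisk \ (S : Set ℂ)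
    · have hopen : IsOpen (uDisk \ (S : Set ℂ)) :=
        Metric.isOpen_ball.sdiff S.finite_toSet.isClosed
      have h1 := Complex.differentiableOn_update_limUnder_of_bddAbove (hopen.mem_nhds hsU) hc
        ⟨C, by rintro _ ⟨z, hz, rfl⟩; exact hC z hz⟩
      obtain ⟨c', hc', he⟩ := ih (C := max C
        ‖Function.update c s (limUnder (𝓝[≠] s) c) s‖) h1 (by
          intro z hz
          by_cases hzs : z = s
          · rw [hzs]
            exact le_max_right _ _
          · rw [Function.update_of_ne hzs]
            exact (hC z ⟨hz, hzs⟩).trans (le_max_left _ _))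
      refine ⟨c', hc', fun z hz => ?_⟩
      rw [he z hz.1, Function.update_of_ne hz.2]
    · have h2 : (uDisk \ (S : Set ℂ)) \ {s} = uDisk \ S := Set.sdiff_singleton_eq_self hsU
      rw [h2] at hc hC ⊢
      exact ih hc hC

/-- The coefficients of the polynomials attached to the fibers of `B` are (up to removable
singularities at the critical values) bounded holomorphic functions of the base point. -/
lemma exists_coeff_fun {n : ℕ} {a : Fin n → ℂ} (ha : ∀ j, a j ∈ uDisk) {i₀ : Fin n}
    (hi₀ : a i₀ = 0) {f g : ℂ → ℂ} (hf : MemHinf f) (hg : MemHinf g) (k : ℕ) :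
    ∃ c : ℂ → ℂ, MemHinf c ∧ ∀ w ∈ uDisk, w ∉ critVals a →
      c w = (msPoly f g (blPoly a w).roots).coeff k := by
  obtain ⟨Cf, hCf⟩ := hf.2
  obtain ⟨Cg, hCg⟩ := hg.2
  obtain ⟨C, hC⟩ := exists_bound_coeff_lagPoly n Cf Cg k
  have hdiff : DifferentiableOn ℂ (fun w => (msPoly f g (blPoly a w).roots).coeff k)
      (uDisk \ critVals a) := by
    intro w₀ hw₀
    obtain ⟨ψ, hψa, hψ⟩ := exists_branches ha hi₀ hw₀.1 hw₀.2
    have hψ₀ := hψ.self_of_nhds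
    have hd : ∀ h : ℂ → ℂ, DifferentiableOn ℂ h uDisk →
        DifferentiableAt ℂ (fun w => fun i => h (ψ i w)) w₀ := fun h hh =>
      differentiableAt_pi.2 fun i =>
        DifferentiableAt.comp w₀ (hh.differentiableAt (Metric.isOpen_ball.mem_nhds (hψ₀.2.1 i)))
          (hψa i).differentiableAt
    have h1 := differentiableAt_coeff_lagPoly (hd f hf.1) (hd g hg.1) k
    refine (h1.congr_of_eventuallyEq ?_).differentiableWithinAt
    filter_upwards [hψ] with w hw
    rw [hw.2.2.2.2, msPoly_map]
  have hbound : ∀ w ∈ uDisk \ (critVals a : Set ℂ),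
      ‖(msPoly f g (blPoly a w).roots).coeff k‖ ≤ C := by
    intro w hw
    obtain ⟨ψ, -, hψ⟩ := exists_branches ha hi₀ hw.1 hw.2
    obtain ⟨-, hm, -, -, hr⟩ := hψ.self_of_nhds
    rw [hr, msPoly_map]
    exact hC _ _ (fun i => hCf _ (hm i)) fun i => hCg _ (hm i)
  obtain ⟨c, hc, hce⟩ := exists_extension (critVals a) hdiff hbound
  refine ⟨c, ⟨hc, |C| + ∑ s ∈ critVals a, ‖c s‖, fun w hw => ?_⟩,
    fun w hw hwc => hce w ⟨hw, hwc⟩⟩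
  have hsum : 0 ≤ ∑ s ∈ critVals a, ‖c s‖ := Finset.sum_nonneg fun _ _ => norm_nonneg _
  by_cases hwc : w ∈ critVals a
  · have h1 := Finset.single_le_sum (f := fun s => ‖c s‖) (fun _ _ => norm_nonneg _) hwc
    have h2 := abs_nonneg C
    linarith
  · have h1 := hbound w ⟨hw, hwc⟩
    have h2 := le_abs_self C
    rw [hce w ⟨hw, hwc⟩]
    linarith

/-- The interpolation identity: `f 𝒟(g)` is a polynomial in `g` whose coefficients are functions
of `B`. -/
lemma sum_coeff_mul_pow {n : ℕ} {a : Fin n → ℂ} (ha : ∀ j, a j ∈ uDisk) {i₀ : Fin n}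
    (hi₀ : a i₀ = 0) (f g : ℂ → ℂ) {z : ℂ} (hz : z ∈ uDisk) (hze : z ∉ excPts a) :
    ∑ k ∈ Finset.range n, (msPoly f g (blPoly a (blaschke a z)).roots).coeff k * g z ^ k
      = f z * calD a g z := by
  obtain ⟨ψ, -, hψ⟩ := exists_branches ha hi₀ (blaschke_mem ha hi₀ hz)
    (blaschke_notMem_critVals ha hi₀ hz hze)
  obtain ⟨-, -, hB, -, hr⟩ := hψ.self_of_nhds
  have h1 : z ∈ (blPoly a (blaschke a z)).roots := (mem_roots_blPoly_iff ha hi₀ hz).2 rfl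
  have h1' := h1
  rw [hr] at h1'
  obtain ⟨i, -, hi⟩ := Multiset.mem_map.1 h1'
  have h2 := calD_eq_prod g hr hB i
  rw [hr, msPoly_map, ← Polynomial.eval_eq_sum_range' (natDegree_lagPoly_lt i₀ _ _)]
  have h3 := eval_lagPoly (fun i => f (ψ i (blaschke a z))) (fun i => g (ψ i (blaschke a z))) i
  simp only [hi] at h2 h3
  rw [h2, h3]

lemma calD_id_ne_zero {n : ℕ} {a : Fin n → ℂ} (ha : ∀ j, a j ∈ uDisk) {i₀ : Fin n}
    (hi₀ : a i₀ = 0) {z : ℂ} (hz : z ∈ uDisk) (hze : z ∉ excPts a) : calD a id z ≠ 0 := by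
  have hnd := nodup_roots_blPoly ha hi₀ (blaschke_mem ha hi₀ hz)
    (blaschke_notMem_critVals ha hi₀ hz hze)
  rw [calD, fiberMS_eq]
  intro h
  rw [Multiset.prod_eq_zero_iff, Multiset.mem_map] at h
  obtain ⟨w, hw, hwz⟩ := h
  exact (hnd.mem_erase_iff.1 hw).1 (sub_eq_zero.1 hwz).symm

lemma eq_of_eq_off_finset {u v : ℂ → ℂ} (hu : ContinuousOn u uDisk) (hv : ContinuousOn v uDisk)
    (s : Finset ℂ) (h : ∀ z ∈ uDisk, z ∉ s → u z = v z) : ∀ z ∈ uDisk, u z = v z := by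
  intro z hz
  have hzn : uDisk ∈ 𝓝 z := Metric.isOpen_ball.mem_nhds hz
  have h1 : ∀ᶠ x in 𝓝[≠] z, x ∉ s := by
    have h2 : ((s.erase z : Finset ℂ) : Set ℂ)ᶜ ∈ 𝓝 z :=
      (s.erase z).finite_toSet.isClosed.isOpen_compl.mem_nhds (by simp)
    filter_upwards [self_mem_nhdsWithin, nhdsWithin_le_nhds h2] with x hx hx2 hxs
    exact hx2 (Finset.mem_coe.2 (Finset.mem_erase.2 ⟨hx, hxs⟩))
  refine tendsto_nhds_unique ((hu.continuousAt hzn).tendsto.mono_left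
    (nhdsWithin_le_nhds (s := {z}ᶜ))) (Tendsto.congr' ?_ ((hv.continuousAt hzn).tendsto.mono_left
    (nhdsWithin_le_nhds (s := {z}ᶜ))))
  filter_upwards [h1, nhdsWithin_le_nhds hzn] with x hx hx2 using (h x hx2 hx).symm

/-! ### Nonvanishing `Γ(g)` yields a nontrivial invariant subspace -/

/-- All products `z^m 𝒟(g)` lie in the closed algebra, so (the holomorphic extension of) `𝒟(g)`
belongs to its largest `z`-invariant subspace. -/
lemma backward {n : ℕ} {a : Fin n → ℂ} (ha : ∀ j, a j ∈ uDisk) {i₀ : Fin n} (hi₀ : a i₀ = 0)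
    {g Γg : ℂ → ℂ} (hg : MemHinf g) (hΓg : IsGamma a g Γg) {p : ℝ} (hp : 0 < p)
    (h : ∀ M : Set (ℂ → ℂ), IsZInvSubspace p M → M ⊆ hpClosure p (algGen2 (blaschke a) g) →
      ∀ f ∈ M, ∀ z ∈ uDisk, f z = 0) :
    ∀ z ∈ uDisk, Γg z = 0 := by
  have hbd := differentiableOn_blaschke ha
  have hb1 : ∀ z ∈ uDisk, blaschke a z ∈ uDisk := fun z hz => blaschke_mem ha hi₀ hz
  have hbH : MemHinf (blaschke a) := ⟨hbd, 1, fun z hz =>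
    (mem_ball_zero_iff.1 (hb1 z hz)).le⟩
  have hSp : ∀ u ∈ algGen2 (blaschke a) g, MemHp p u := fun u hu =>
    (memHinf_of_mem_algGen2 hbH hg hu).memHp hp
  choose c hc hce using fun m k : ℕ =>
    exists_coeff_fun ha hi₀ (MemHinf.id.pow m) hg k
  let H : ℕ → ℂ → ℂ := fun m z => ∑ k ∈ Finset.range n, c m k (blaschke a z) * g z ^ k
  have hHmem : ∀ m, H m ∈ hpClosure p (algGen2 (blaschke a) g) := fun m =>
    sum_mem_hpClosure hp hbH hg _ fun k _ =>
      comp_mul_pow_mem_hpClosure hp hbd hb1 (blaschke_zero hi₀) hg (hc m k) k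
  have hHcont : ∀ m, ContinuousOn (H m) uDisk := fun m => (hHmem m).1.1.continuousOn
  have hHval : ∀ m, ∀ z ∈ uDisk, z ∉ excPts a → H m z = z ^ m * calD a g z := by
    intro m z hz hze
    rw [← sum_coeff_mul_pow ha hi₀ (fun z => z ^ m) g hz hze]
    exact Finset.sum_congr rfl fun k _ => by
      rw [hce m k _ (hb1 z hz) (blaschke_notMem_critVals ha hi₀ hz hze)]
  have hHm : ∀ m, ∀ z ∈ uDisk, H m z = z ^ m * H 0 z := fun m =>
    eq_of_eq_off_finset (hHcont m) ((continuous_pow m).continuousOn.mul (hHcont 0)) (excPts a)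
      fun z hz hze => by rw [hHval m z hz hze, hHval 0 z hz hze, pow_zero, one_mul]
  have hH0 : ∀ z ∈ uDisk, H 0 z = 0 := by
    refine h _ (isZInvSubspace_maximal hp hbH hg) (fun f hf => ?_) (H 0) fun m =>
      mem_hpClosure_congr hp hSp (hHmem m) (hHm m)
    simpa using hf 0
  refine eq_of_eq_off_finset hΓg.1.continuousOn continuousOn_const (excPts a) fun z hz hze => ?_
  have h1 := hΓg.2 z hz
  have h2 := hHval 0 z hz hze
  rw [hH0 z hz, pow_zero, one_mul] at h2
  rw [← h2] at h1
  exact (mul_eq_zero.1 h1).resolve_right (calD_id_ne_zero ha hi₀ hz hze)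

/-- **Theorem D′.** For `g ∈ H^∞` and `0 < p < ∞`, `Γ(g)` vanishes
identically on `𝔻` iff the only `z`-invariant subspace of `H^p` contained in the
`H^p`-closure of `ℂ[B,g]` is the trivial subspace `{0}`. -/
theorem stmt15 {n : ℕ} (hn : 2 ≤ n) (a : Fin n → ℂ) (ha : ∀ j, a j ∈ uDisk)
    (ha0 : a ⟨0, by omega⟩ = 0)
    (g Γg : ℂ → ℂ) (hg : MemHinf g) (hΓg : IsGamma a g Γg)
    (p : ℝ) (hp : 0 < p) :
    (∀ z ∈ uDisk, Γg z = 0) ↔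
      ∀ M : Set (ℂ → ℂ), IsZInvSubspace p M →
        M ⊆ hpClosure p (algGen2 (blaschke a) g) →
        ∀ f ∈ M, ∀ z ∈ uDisk, f z = 0 := by
  exact ⟨fun h0 M hM hMs f hf => forward ha ha0 hg hΓg hp h0 hM hMs hf,
    fun h => backward ha ha0 hg hΓg hp h⟩
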